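/- arXiv:1610.05740 — 5 statements merged into one kernel-verified Lean document; each statement's English description precedes it below -/
import Mathlib

section
/- Fix u₀ ∈ (0,1). For a function F : ℝ → ℝ, the following are equivalent: (1) F applied entrywise maps M({−1,−u₀}) into M([0,∞)) and maps M₄({−1,0}) together with M₄({−u}) for every u ∈ (0,1) into M₄([0,∞)); (2) F applied entrywise sends M([−1,0]) to M([0,1]); (3) there exists an absolutely monotonic entire function F̃ such that F(x) = F̃(x) for x > 0 and F(x) = F̃(−x) for x < 0, and moreover 0 ≤ F(0) ≤ lim_{ε→0} F(ε). -/
open MeasureTheory Filter Set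
open scoped ENNReal

/-- An admissible measure: a non-negative Borel measure on `ℝ` all of whose absolute
moments are finite. -/
def IsAdmissible (μ : Measure ℝ) : Prop := ∀ k : ℕ, Integrable (fun x => x ^ k) μ

/-- The `k`-th power moment of a measure. -/
noncomputable def moment (μ : Measure ℝ) (k : ℕ) : ℝ := ∫ x, x ^ k ∂μ

/-- `momentSet K` is the set of moment sequences of admissible measures supported in `K`. -/
def momentSet (K : Set ℝ) : Set (ℕ → ℝ) :=
  {s | ∃ μ : Measure ℝ, IsAdmissible μ ∧ μ Kᶜ = 0 ∧ ∀ k, s k = moment μ k}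

/-- An absolutely monotonic entire function: a power series with non-negative
coefficients converging at every real point. -/
def AbsolutelyMonotonicEntire (G : ℝ → ℝ) : Prop :=
  ∃ c : ℕ → ℝ, (∀ n, 0 ≤ c n) ∧ ∀ x : ℝ, HasSum (fun n => c n * x ^ n) (G x)

/-- `truncMomentSet n K` is the set of truncated moment sequences `(s₀(μ), …, sₙ(μ))`
of admissible measures supported in `K`. -/
def truncMomentSet (n : ℕ) (K : Set ℝ) : Set (Fin (n + 1) → ℝ) :=
  {s | ∃ μ : Measure ℝ, IsAdmissible μ ∧ μ Kᶜ = 0 ∧ ∀ k : Fin (n + 1), s k = moment μ k}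

lemma aux_taylor (G : ℝ → ℝ) (hG : ContDiff ℝ (⊤ : ℕ∞) G) (x₀ x : ℝ) (h : x₀ < x) (n : ℕ) :
    ∃ ξ ∈ Icc x₀ x, G x = ∑ k ∈ Finset.range n, iteratedDeriv k G x₀ * (x - x₀) ^ k / k.factorial
      + iteratedDeriv n G ξ * (x - x₀) ^ n / n.factorial := by
  cases n with
  | zero => exact ⟨x, ⟨h.le, le_rfl⟩, by simp⟩
  | succ n =>
    have hn : ContDiff ℝ (n + 1) G := hG.of_le (by exact_mod_cast le_top)
    obtain ⟨ξ, hξ, he⟩ := taylor_mean_remainder_lagrange_iteratedDeriv (n := n) h.ne hn.contDiffOn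
    rw [uIoo_of_lt h] at hξ
    refine ⟨ξ, Ioo_subset_Icc_self hξ, ?_⟩
    rw [← he, taylor_within_apply]
    have : ∑ k ∈ Finset.range (n + 1), (((k.factorial : ℝ))⁻¹ * (x - x₀) ^ k) •
          iteratedDerivWithin k G (uIcc x₀ x) x₀ =
        ∑ k ∈ Finset.range (n + 1), iteratedDeriv k G x₀ * (x - x₀) ^ k / k.factorial := by
      refine Finset.sum_congr rfl fun k _ => ?_
      rw [iteratedDerivWithin_eq_iteratedDeriv (uniqueDiffOn_uIcc h.ne)
        (hG.of_le (by exact_mod_cast le_top)).contDiffAt left_mem_uIcc]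
      simp only [smul_eq_mul]; ring
    rw [this]; ring

lemma aux_bernstein (G : ℝ → ℝ) (hG : ContDiff ℝ (⊤ : ℕ∞) G)
    (hpos : ∀ n, ∀ x, 0 ≤ x → 0 ≤ iteratedDeriv n G x) (x : ℝ) (hx : 0 ≤ x) :
    HasSum (fun n => iteratedDeriv n G 0 / n.factorial * x ^ n) (G x) := by
  rcases hx.eq_or_lt with rfl | hx
  · have := hasSum_single (f := fun n => iteratedDeriv n G 0 / n.factorial * (0:ℝ) ^ n) 0
      (fun n hn => by simp [hn])
    simpa using this
  have hmono : ∀ n, MonotoneOn (iteratedDeriv n G) (Ici 0) := by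
    intro n
    refine monotoneOn_of_deriv_nonneg (convex_Ici 0)
      (hG.continuous_iteratedDeriv n (by exact_mod_cast le_top)).continuousOn
      (hG.differentiable_iteratedDeriv n (by exact_mod_cast WithTop.coe_lt_top _)).differentiableOn ?_
    intro y hy
    rw [← iteratedDeriv_succ]
    exact hpos _ _ (interior_subset hy)
  rw [hasSum_iff_tendsto_nat_of_nonneg
    (fun n => mul_nonneg (div_nonneg (hpos n 0 le_rfl) (by positivity)) (by positivity))]
  have key : ∀ n : ℕ, |(∑ k ∈ Finset.range n, iteratedDeriv k G 0 / k.factorial * x ^ k) - G x|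
      ≤ G (3 * x) * (1 / 2) ^ n := by
    intro n
    obtain ⟨ξ, hξ, he⟩ := aux_taylor G hG 0 x hx n
    obtain ⟨η, hη, he'⟩ := aux_taylor G hG x (3 * x) (by linarith) n
    have h1 : ∑ k ∈ Finset.range n, iteratedDeriv k G 0 / k.factorial * x ^ k
        = ∑ k ∈ Finset.range n, iteratedDeriv k G 0 * (x - 0) ^ k / k.factorial :=
      Finset.sum_congr rfl fun k _ => by rw [sub_zero]; ring
    have h2 : 0 ≤ ∑ k ∈ Finset.range n, iteratedDeriv k G x * (3 * x - x) ^ k / k.factorial :=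
      Finset.sum_nonneg fun k _ => div_nonneg (mul_nonneg (hpos k x hx.le)
        (pow_nonneg (by linarith) _)) (by positivity)
    have h3 : iteratedDeriv n G ξ ≤ iteratedDeriv n G η :=
      hmono n hξ.1 (hx.le.trans hη.1) (hξ.2.trans hη.1)
    have h4 := hpos n ξ hξ.1
    have h5 : iteratedDeriv n G η * (3 * x - x) ^ n / n.factorial ≤ G (3 * x) := by linarith
    have h6 : iteratedDeriv n G ξ * x ^ n / n.factorial =
        iteratedDeriv n G ξ * (3 * x - x) ^ n / n.factorial * (1 / 2) ^ n := by
      rw [show (3 * x - x) = 2 * x by ring, mul_pow]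
      have : (2:ℝ) ^ n * (1 / 2) ^ n = 1 := by rw [← mul_pow]; norm_num
      linear_combination (-(iteratedDeriv n G ξ * x ^ n / n.factorial)) * this
    rw [h1, abs_sub_comm, he, add_sub_cancel_left, sub_zero, abs_of_nonneg (by positivity), h6]
    refine mul_le_mul_of_nonneg_right (le_trans ?_ h5) (by positivity)
    have : 0 ≤ 3 * x - x := by linarith
    gcongr
  rw [tendsto_iff_norm_sub_tendsto_zero]
  refine squeeze_zero (fun _ => norm_nonneg _) (fun n => by simpa using key n) ?_
  have := (tendsto_pow_atTop_nhds_zero_of_lt_one (r := (1/2:ℝ)) (by norm_num) (by norm_num)).const_mul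
    (G (3 * x))
  simpa using this

/-- first nonvanishing derivative is nonneg -/
lemma aux_first (H : ℝ → ℝ) (hH : ContDiff ℝ (⊤ : ℕ∞) H) (hpos : ∀ b, 0 ≤ b → 0 ≤ H b) (n : ℕ)
    (hz : ∀ m < n, iteratedDeriv m H 0 = 0) : 0 ≤ iteratedDeriv n H 0 := by
  by_contra! hneg
  have hc : Continuous (iteratedDeriv n H) :=
    hH.continuous_iteratedDeriv n (by exact_mod_cast le_top)
  obtain ⟨ε, hε, hball⟩ := Metric.mem_nhds_iff.1 (hc.continuousAt.eventually_lt_const hneg)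
  obtain ⟨ξ, hξ, he⟩ := aux_taylor H hH 0 (ε / 2) (by linarith) n
  rw [Finset.sum_eq_zero (fun k hk => by rw [hz k (Finset.mem_range.1 hk)]; simp)] at he
  have h1 : iteratedDeriv n H ξ < 0 := hball (by
    rw [Metric.mem_ball, Real.dist_eq, sub_zero, abs_of_nonneg hξ.1]; linarith [hξ.2])
  have h2 := hpos (ε / 2) (by linarith)
  rw [he, zero_add, sub_zero] at h2
  have : iteratedDeriv n H ξ * (ε / 2) ^ n / n.factorial < 0 :=
    div_neg_of_neg_of_pos (mul_neg_of_neg_of_pos h1 (by positivity)) (by positivity)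
  linarith

def PosOn (u : ℝ) (F : ℝ → ℝ) : Prop :=
  ∀ p : Polynomial ℝ, (∀ t, 0 ≤ p.eval t) → ∀ a b : ℝ, 0 ≤ a → 0 ≤ b →
    0 ≤ ∑ k ∈ Finset.range (p.natDegree + 1), p.coeff k * F (a + b * u ^ k)

lemma aux_loewner (u : ℝ) (hu : u ∈ Ioo (0:ℝ) 1) (G : ℝ → ℝ) (hG : ContDiff ℝ (⊤ : ℕ∞) G)
    (hP : PosOn u G) (n : ℕ) (a : ℝ) (ha : 0 ≤ a) : 0 ≤ iteratedDeriv n G a := by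
  set p : Polynomial ℝ := ∏ j ∈ Finset.range n, (Polynomial.X - Polynomial.C (u ^ j)) ^ 2 with hp
  have hev : ∀ t, p.eval t = ∏ j ∈ Finset.range n, (t - u ^ j) ^ 2 := by
    intro t; simp [hp, Polynomial.eval_prod]
  have hp0 : ∀ t, 0 ≤ p.eval t := fun t => by rw [hev]; positivity
  set D : ℕ → ℝ → ℝ := fun m b => ∑ k ∈ Finset.range (p.natDegree + 1),
    p.coeff k * ((u ^ k) ^ m * iteratedDeriv m G (a + b * u ^ k)) with hD
  have hder : ∀ m b, HasDerivAt (D m) (D (m + 1) b) b := by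
    intro m b
    simp only [hD]
    refine HasDerivAt.fun_sum fun k _ => HasDerivAt.const_mul _ ?_
    have h1 : HasDerivAt (iteratedDeriv m G) (iteratedDeriv (m + 1) G (a + b * u ^ k))
        (a + b * u ^ k) := by
      rw [iteratedDeriv_succ]
      exact (hG.differentiable_iteratedDeriv m
        (by exact_mod_cast WithTop.coe_lt_top _) _).hasDerivAt
    have h2 : HasDerivAt (fun b : ℝ => a + b * u ^ k) (u ^ k) b := by
      simpa using ((hasDerivAt_id b).mul_const (u ^ k)).const_add a
    have := (h1.comp b h2).const_mul ((u ^ k) ^ m)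
    have e : (u ^ k) ^ (m + 1) * iteratedDeriv (m + 1) G (a + b * u ^ k) =
        (u ^ k) ^ m * (iteratedDeriv (m + 1) G (a + b * u ^ k) * u ^ k) := by
      rw [pow_succ]; ring
    rw [e]
    exact this
  have hit : ∀ m, iteratedDeriv m (D 0) = D m := by
    intro m
    induction m with
    | zero => simp
    | succ m ih => rw [iteratedDeriv_succ, ih]; funext b; exact (hder m b).deriv
  have hD0 : ∀ m, D m 0 = p.eval (u ^ m) * iteratedDeriv m G a := by
    intro m
    simp only [hD, zero_mul, add_zero, Polynomial.eval_eq_sum_range, Finset.sum_mul]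
    refine Finset.sum_congr rfl fun k _ => ?_
    rw [← pow_mul, ← pow_mul, mul_comm k m]; ring
  have hsm : ContDiff ℝ (⊤ : ℕ∞) (D 0) := by
    simp only [hD, pow_zero, one_mul, iteratedDeriv_zero]
    refine ContDiff.sum fun k _ => contDiff_const.mul (hG.comp ?_)
    fun_prop
  have := aux_first (D 0) hsm (fun b hb => by
    simpa [hD] using hP p hp0 a b ha hb) n (fun m hm => by
      rw [hit, hD0, hev, Finset.prod_eq_zero (Finset.mem_range.2 hm) (by simp), zero_mul])
  rw [hit, hD0] at this
  refine nonneg_of_mul_nonneg_right this ?_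
  rw [hev]
  refine Finset.prod_pos fun j hj => ?_
  have : u ^ n < u ^ j := pow_lt_pow_right_of_lt_one₀ hu.1 hu.2 (Finset.mem_range.1 hj)
  have : u ^ n - u ^ j ≠ 0 := by linarith
  positivity

open scoped Convolution in
lemma aux_mollify (u : ℝ) (F : ℝ → ℝ) (hF : Monotone F) (hP : PosOn u F) (r : ℝ) (hr : 0 < r) :
    ∃ G : ℝ → ℝ, ContDiff ℝ (⊤ : ℕ∞) G ∧ PosOn u G ∧ ∀ x, F x ≤ G x ∧ G x ≤ F (x + 2 * r) := by
  let φ : ContDiffBump (0 : ℝ) := ⟨r / 2, r, half_pos hr, half_lt_self hr⟩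
  have hloc : LocallyIntegrable F volume := hF.locallyIntegrable
  set ψ : ℝ → ℝ := φ.normed volume with hψ
  have hψ0 : ∀ t, 0 ≤ ψ t := φ.nonneg_normed
  have hsupp : ∀ t, ψ t ≠ 0 → -r < t ∧ t < r := by
    intro t ht
    have : t ∈ Function.support ψ := ht
    rw [hψ, φ.support_normed_eq, Metric.mem_ball, Real.dist_eq, sub_zero] at this
    exact abs_lt.1 this
  have hint : ∀ x, Integrable (fun t => ψ t * F (x - t)) := by
    intro x
    exact (φ.hasCompactSupport_normed (μ := volume)).convolutionExists_left
      (ContinuousLinearMap.lsmul ℝ ℝ) φ.continuous_normed hloc x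
  have hone : ∫ t, ψ t = 1 := φ.integral_normed
  have hψi : Integrable ψ := φ.integrable_normed
  refine ⟨fun x => ∫ t, ψ t * F (x + r - t), ?_, ?_, ?_⟩
  · have h1 : ContDiff ℝ (⊤ : ℕ∞) (ψ ⋆[ContinuousLinearMap.lsmul ℝ ℝ, volume] F) :=
      (φ.hasCompactSupport_normed (μ := volume)).contDiff_convolution_left _ φ.contDiff_normed hloc
    exact h1.comp (contDiff_id.add contDiff_const)
  · intro p hp a b ha hb
    have : ∑ k ∈ Finset.range (p.natDegree + 1), p.coeff k * ∫ t, ψ t * F (a + b * u ^ k + r - t)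
        = ∫ t, ψ t * ∑ k ∈ Finset.range (p.natDegree + 1),
          p.coeff k * F ((a + r - t) + b * u ^ k) := by
      simp_rw [← integral_const_mul]
      rw [← integral_finsetSum _ (fun k _ => (hint _).const_mul _)]
      congr 1; funext t
      rw [Finset.mul_sum]
      refine Finset.sum_congr rfl fun k _ => ?_
      rw [show a + b * u ^ k + r - t = (a + r - t) + b * u ^ k by ring]; ring
    simp only [this]
    refine integral_nonneg fun t => ?_
    by_cases ht : ψ t = 0
    · simp [ht]
    · exact mul_nonneg (hψ0 t) (hP p hp _ b (by linarith [(hsupp t ht).2]) hb)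
  · intro x
    constructor
    · have : F x = ∫ t, ψ t * F x := by rw [integral_mul_const, hone, one_mul]
      rw [this]
      refine integral_mono (hψi.mul_const _) (hint _) fun t => ?_
      by_cases ht : ψ t = 0
      · simp [ht]
      · exact mul_le_mul_of_nonneg_left (hF (by linarith [(hsupp t ht).2])) (hψ0 t)
    · have : F (x + 2 * r) = ∫ t, ψ t * F (x + 2 * r) := by rw [integral_mul_const, hone, one_mul]
      rw [this]
      refine integral_mono (hint _) (hψi.mul_const _) fun t => ?_
      by_cases ht : ψ t = 0
      · simp [ht]
      · exact mul_le_mul_of_nonneg_left (hF (by linarith [(hsupp t ht).1])) (hψ0 t)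

lemma aux_series_continuous (d : ℕ → ℝ) (hd0 : ∀ n, 0 ≤ d n)
    (hsum : ∀ x : ℝ, Summable (fun n => d n * x ^ n)) :
    Continuous (fun x : ℝ => ∑' n, d n * x ^ n) := by
  rw [continuous_iff_continuousAt]
  intro x
  have : ContinuousOn (fun x => ∑' n, d n * x ^ n) (Metric.ball 0 (|x| + 1)) := by
    refine continuousOn_tsum (fun n => by fun_prop) (hsum (|x| + 1)) ?_
    intro n y hy
    rw [mem_ball_zero_iff] at hy
    rw [norm_mul, norm_pow, Real.norm_of_nonneg (hd0 n)]
    exact mul_le_mul_of_nonneg_left (pow_le_pow_left₀ (norm_nonneg _) hy.le _) (hd0 n)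
  exact this.continuousAt (Metric.isOpen_ball.mem_nhds (by
    rw [mem_ball_zero_iff, Real.norm_eq_abs]; linarith))

lemma aux_series (u : ℝ) (hu : u ∈ Ioo (0:ℝ) 1) (F : ℝ → ℝ) (hF : Monotone F) (hP : PosOn u F) :
    ∃ c : ℕ → ℝ, (∀ n, 0 ≤ c n) ∧ (∀ x : ℝ, Summable (fun n => c n * x ^ n)) ∧
      ∀ x > 0, F x = ∑' n, c n * x ^ n := by
  have h1 : ∀ N : ℕ, ∃ c : ℕ → ℝ, (∀ n, 0 ≤ c n) ∧ ∀ x, 0 ≤ x → ∃ y,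
      HasSum (fun n => c n * x ^ n) y ∧ F x ≤ y ∧ y ≤ F (x + 2 * (1 / (N + 1 : ℝ))) := by
    intro N
    obtain ⟨G, hG, hPG, hb⟩ := aux_mollify u F hF hP (1 / (N + 1 : ℝ)) (by positivity)
    have hpos := aux_loewner u hu G hG hPG
    exact ⟨fun n => iteratedDeriv n G 0 / n.factorial,
      fun n => div_nonneg (hpos n 0 le_rfl) (by positivity),
      fun x hx => ⟨G x, aux_bernstein G hG hpos x hx, hb x⟩⟩
  choose c hc0 hc using h1
  -- bound on the coefficients
  have hbd : ∀ N n (R : ℝ), 0 ≤ R → c N n * R ^ n ≤ F (R + 2) := by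
    intro N n R hR
    obtain ⟨y, hy, -, hy2⟩ := hc N R hR
    refine (le_hasSum hy n fun j _ => mul_nonneg (hc0 N j) (by positivity)).trans (hy2.trans (hF ?_))
    have : 1 / (N + 1 : ℝ) ≤ 1 := by
      rw [div_le_one (by positivity)]; linarith [(Nat.cast_nonneg N : (0:ℝ) ≤ N)]
    linarith
  have hmem : ∀ N, c N ∈ Set.univ.pi (fun _ : ℕ => Icc (0:ℝ) (F (1 + 2))) := by
    intro N n _
    exact ⟨hc0 N n, by simpa using hbd N n 1 zero_le_one⟩
  obtain ⟨d, hd, σ, hσ, hlim⟩ := (isCompact_univ_pi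
    (fun _ : ℕ => (isCompact_Icc : IsCompact (Icc (0:ℝ) (F (1 + 2)))))).tendsto_subseq hmem
  rw [tendsto_pi_nhds] at hlim
  have hd0 : ∀ n, 0 ≤ d n := fun n => (hd n trivial).1
  have hdbd : ∀ n (R : ℝ), 0 ≤ R → d n * R ^ n ≤ F (R + 2) := fun n R hR =>
    le_of_tendsto ((hlim n).mul_const (R ^ n)) (Eventually.of_forall fun N => hbd (σ N) n R hR)
  -- geometric domination
  have hgeo : ∀ (x : ℝ) (e : ℕ → ℝ), (∀ n, 0 ≤ e n) →
      (∀ n (R : ℝ), 0 ≤ R → e n * R ^ n ≤ F (R + 2)) →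
      ∀ n, ‖e n * x ^ n‖ ≤ F (2 * |x| + 1 + 2) * (1 / 2) ^ n := by
    intro x e he0 he n
    have h2 : |x| ^ n ≤ (2 * |x| + 1) ^ n * (1 / 2) ^ n := by
      rw [← mul_pow]
      exact pow_le_pow_left₀ (abs_nonneg x) (by linarith [abs_nonneg x]) n
    rw [norm_mul, norm_pow, Real.norm_eq_abs, Real.norm_eq_abs, abs_of_nonneg (he0 n)]
    calc e n * |x| ^ n ≤ e n * ((2 * |x| + 1) ^ n * (1 / 2) ^ n) :=
          mul_le_mul_of_nonneg_left h2 (he0 n)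
      _ = (e n * (2 * |x| + 1) ^ n) * (1 / 2) ^ n := by ring
      _ ≤ _ := mul_le_mul_of_nonneg_right (he n _ (by positivity)) (by positivity)
  have hgs : ∀ C : ℝ, Summable (fun n : ℕ => C * (1 / 2 : ℝ) ^ n) := fun C =>
    (summable_geometric_of_lt_one (by norm_num) (by norm_num)).mul_left C
  have hsum : ∀ x, Summable (fun n => d n * x ^ n) := fun x =>
    Summable.of_norm_bounded (hgs _) (hgeo x d hd0 hdbd)
  have hT : ∀ x, Tendsto (fun N => ∑' n, c (σ N) n * x ^ n) atTop (nhds (∑' n, d n * x ^ n)) :=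
    fun x => tendsto_tsum_of_dominated_convergence (hgs (F (2 * |x| + 1 + 2)))
      (fun n => (hlim n).mul_const _)
      (Eventually.of_forall fun N n => hgeo x (c (σ N)) (hc0 _) (hbd _) n)
  have hlo : ∀ x, 0 ≤ x → F x ≤ ∑' n, d n * x ^ n := fun x hx =>
    ge_of_tendsto (hT x) (Eventually.of_forall fun N => by
      obtain ⟨y, hy, h, -⟩ := hc (σ N) x hx
      rwa [hy.tsum_eq])
  have hup : ∀ x y, 0 ≤ x → x < y → ∑' n, d n * x ^ n ≤ F y := by
    intro x y hx hxy
    refine le_of_tendsto (hT x) ?_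
    have : Tendsto (fun N : ℕ => x + 2 * (1 / ((σ N : ℕ) + 1 : ℝ))) atTop (nhds (x + 2 * 0)) :=
      ((tendsto_one_div_add_atTop_nhds_zero_nat.comp hσ.tendsto_atTop).const_mul 2).const_add x
    filter_upwards [this.eventually_lt_const (show x + 2 * 0 < y by linarith)] with N hN
    obtain ⟨z, hz, -, h⟩ := hc (σ N) x hx
    rw [hz.tsum_eq]
    exact h.trans (hF hN.le)
  have hcont := aux_series_continuous d hd0 hsum
  refine ⟨d, hd0, hsum, fun x hx => le_antisymm (hlo x hx.le) ?_⟩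
  refine le_of_tendsto (hcont.continuousAt.mono_left (nhdsWithin_le_nhds : nhdsWithin x (Iio x) ≤ _)) ?_
  filter_upwards [Ioo_mem_nhdsLT hx] with y hy
  exact hup y x hy.1.le hy.2


lemma aux_finite {μ : Measure ℝ} (h : IsAdmissible μ) : IsFiniteMeasure μ := by
  have := h 0
  simp only [pow_zero] at this
  exact (integrable_const_iff_isFiniteMeasure one_ne_zero).1 this

lemma aux_adm {μ : Measure ℝ} [IsFiniteMeasure μ] {R : ℝ} (h : μ (Icc (-R) R)ᶜ = 0) :
    IsAdmissible μ := by
  intro k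
  refine Integrable.of_bound (by fun_prop) (R ^ k) ?_
  have : ∀ᵐ x ∂μ, x ∈ Icc (-R) R := h
  filter_upwards [this] with x hx
  rw [norm_pow, Real.norm_eq_abs]
  exact pow_le_pow_left₀ (abs_nonneg _) (abs_le.2 hx) k

lemma aux_adm01 {μ : Measure ℝ} [IsFiniteMeasure μ] (h : μ (Icc 0 1)ᶜ = 0) :
    IsAdmissible μ :=
  aux_adm (R := 1) (measure_mono_null (compl_subset_compl.2 (Icc_subset_Icc (by norm_num) le_rfl)) h)

lemma aux_two (a b x y : ℝ) (ha : 0 ≤ a) (hb : 0 ≤ b) :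
    IsAdmissible (ENNReal.ofReal a • Measure.dirac x + ENNReal.ofReal b • Measure.dirac y) ∧
    (ENNReal.ofReal a • Measure.dirac x + ENNReal.ofReal b • Measure.dirac y) ({x, y} : Set ℝ)ᶜ = 0 ∧
    ∀ k, moment (ENNReal.ofReal a • Measure.dirac x + ENNReal.ofReal b • Measure.dirac y) k =
      a * x ^ k + b * y ^ k := by
  have hi : ∀ (c z : ℝ) (k : ℕ), Integrable (fun x : ℝ => x ^ k) (ENNReal.ofReal c • Measure.dirac z) :=
    fun c z k => (integrable_dirac (by simp)).smul_measure ENNReal.ofReal_ne_top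
  refine ⟨fun k => (hi a x k).add_measure (hi b y k), ?_, fun k => ?_⟩
  · simp
  · rw [moment, integral_add_measure (hi a x k) (hi b y k), integral_smul_measure,
      integral_smul_measure, integral_dirac, integral_dirac, ENNReal.toReal_ofReal ha,
      ENNReal.toReal_ofReal hb, smul_eq_mul, smul_eq_mul]

lemma aux_two_mem (a b x y : ℝ) (ha : 0 ≤ a) (hb : 0 ≤ b) :
    (fun k => a * x ^ k + b * y ^ k) ∈ momentSet {x, y} :=
  ⟨_, (aux_two a b x y ha hb).1, (aux_two a b x y ha hb).2.1,
    fun k => ((aux_two a b x y ha hb).2.2 k).symm⟩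

lemma aux_two_mem_trunc (n : ℕ) (a b x y : ℝ) (ha : 0 ≤ a) (hb : 0 ≤ b) :
    (fun k : Fin (n + 1) => a * x ^ (k : ℕ) + b * y ^ (k : ℕ)) ∈ truncMomentSet n {x, y} :=
  ⟨_, (aux_two a b x y ha hb).1, (aux_two a b x y ha hb).2.1,
    fun k => ((aux_two a b x y ha hb).2.2 k).symm⟩

lemma momentSet_mono {K L : Set ℝ} (h : K ⊆ L) : momentSet K ⊆ momentSet L := by
  rintro s ⟨μ, h1, h2, h3⟩
  exact ⟨μ, h1, measure_mono_null (compl_subset_compl.2 h) h2, h3⟩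

lemma aux_nonneg {ν : Measure ℝ} (h0 : ν (Ici 0)ᶜ = 0) (j : ℕ) : 0 ≤ moment ν j := by
  have : ∀ᵐ x ∂ν, x ∈ Ici (0:ℝ) := h0
  refine integral_nonneg_of_ae ?_
  filter_upwards [this] with x hx
  exact pow_nonneg hx j

lemma aux_CS {ν : Measure ℝ} (h : IsAdmissible ν) (h0 : ν (Ici 0)ᶜ = 0) (j : ℕ) :
    moment ν (j + 1) ^ 2 ≤ moment ν j * moment ν (j + 2) := by
  have hae : ∀ᵐ x ∂ν, x ∈ Ici (0:ℝ) := h0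
  have key : ∀ l : ℝ, 0 ≤ moment ν j * (l * l) + (-2 * moment ν (j + 1)) * l + moment ν (j + 2) := by
    intro l
    have e : moment ν j * (l * l) + (-2 * moment ν (j + 1)) * l + moment ν (j + 2)
        = ∫ x, (x ^ j * (l * l) + (x ^ (j + 1) * (-2 * l)) + x ^ (j + 2)) ∂ν := by
      have i1 : Integrable (fun x : ℝ => x ^ j * (l * l) + x ^ (j + 1) * (-2 * l)) ν :=
        ((h j).mul_const _).add ((h (j+1)).mul_const _)
      rw [integral_add i1 (h (j+2)), integral_add ((h j).mul_const _) ((h (j+1)).mul_const _), integral_mul_const,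
        integral_mul_const]
      simp only [moment]; ring
    rw [e]
    refine integral_nonneg_of_ae ?_
    filter_upwards [hae] with x hx
    have : x ^ j * (l * l) + (x ^ (j + 1) * (-2 * l)) + x ^ (j + 2) = x ^ j * (x - l) ^ 2 := by ring
    simp only [Pi.zero_apply]
    rw [this]
    exact mul_nonneg (pow_nonneg hx j) (sq_nonneg _)
  have := discrim_le_zero key
  rw [discrim] at this
  nlinarith

lemma aux_poly {ν : Measure ℝ} (h : IsAdmissible ν) (p : Polynomial ℝ) (hp : ∀ t, 0 ≤ p.eval t) :
    0 ≤ ∑ k ∈ Finset.range (p.natDegree + 1), p.coeff k * moment ν k := by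
  have : ∑ k ∈ Finset.range (p.natDegree + 1), p.coeff k * moment ν k = ∫ x, p.eval x ∂ν := by
    simp_rw [Polynomial.eval_eq_sum_range, moment, ← integral_const_mul]
    rw [integral_finsetSum _ (fun k _ => (h k).const_mul _)]
  rw [this]
  exact integral_nonneg hp

lemma aux_one_three (u₀ : ℝ) (hu₀ : u₀ ∈ Set.Ioo (0 : ℝ) 1) (F : ℝ → ℝ)
    (h1 : ∀ s ∈ momentSet ({-1, -u₀} : Set ℝ), (fun k => F (s k)) ∈ momentSet (Set.Ici (0 : ℝ)))
    (h2 : ∀ s ∈ truncMomentSet 4 ({-1, 0} : Set ℝ),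
          (fun k => F (s k)) ∈ truncMomentSet 4 (Set.Ici (0 : ℝ))) :
    ∃ G : ℝ → ℝ, AbsolutelyMonotonicEntire G ∧ (∀ x > (0 : ℝ), F x = G x) ∧
          (∀ x < (0 : ℝ), F x = G (-x)) ∧ 0 ≤ F 0 ∧
          ∃ L : ℝ, Tendsto F (nhdsWithin 0 {(0 : ℝ)}ᶜ) (nhds L) ∧ F 0 ≤ L := by
  have key : ∀ a b : ℝ, 0 ≤ a → 0 ≤ b → 0 ≤ F a ∧ F (-a) = F a ∧ F a ≤ F (a + b) := by
    intro a b ha hb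
    obtain ⟨ν, hν, hν0, hm⟩ := h2 _ (aux_two_mem_trunc 4 a b (-1) 0 ha hb)
    have m0 := hm 0
    have m1 := hm 1
    have m2 := hm 2
    have m3 := hm 3
    have m4 := hm 4
    norm_num [Fin.val_ofNat] at m0 m1 m2 m3 m4
    have n0 := aux_nonneg hν0 0
    have n1 := aux_nonneg hν0 1
    have n2 := aux_nonneg hν0 2
    have c0 := aux_CS hν hν0 0
    have c1 := aux_CS hν hν0 1
    have c2 := aux_CS hν hν0 2
    norm_num at c0 c1 c2
    rw [← m0] at n0
    rw [← m1] at n1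
    rw [← m2] at n2
    rw [← m0, ← m1, ← m2] at c0
    rw [← m1, ← m2, ← m3] at c1
    rw [← m2, ← m3, ← m4] at c2
    have e : F (-a) = F a := by nlinarith
    refine ⟨n2, e, ?_⟩
    rw [e] at c0
    by_contra! hlt
    nlinarith
  have heven : ∀ x, F (-x) = F x := by
    intro x
    rcases le_total 0 x with hx | hx
    · exact (key x 0 hx le_rfl).2.1
    · have := (key (-x) 0 (by linarith) le_rfl).2.1
      rw [neg_neg] at this; exact this.symm
  have hmono : ∀ x y, 0 ≤ x → x ≤ y → F x ≤ F y := by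
    intro x y hx hy
    have := (key x (y - x) hx (by linarith)).2.2
    rwa [add_sub_cancel] at this
  set f : ℝ → ℝ := fun x => F (max x 0) with hf
  have hfm : Monotone f := fun x y hxy => hmono _ _ (le_max_right _ _) (max_le_max hxy le_rfl)
  have hP : PosOn u₀ f := by
    intro p hp a b ha hb
    obtain ⟨ν, hν, hν0, hm⟩ := h1 _ (aux_two_mem a b (-1) (-u₀) ha hb)
    have := aux_poly hν p hp
    refine this.trans_eq (Finset.sum_congr rfl fun k _ => ?_)
    rw [← hm k]
    simp only [hf]
    have hu := hu₀.1
    rw [max_eq_left (by positivity), neg_pow u₀]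
    rcases neg_one_pow_eq_or ℝ k with h | h
    · rw [h]; simp
    · rw [h, ← heven (a + b * u₀ ^ k)]; congr 2; ring
  obtain ⟨c, hc0, hcs, hcF⟩ := aux_series u₀ hu₀ f hfm hP
  have hFpos : ∀ x > (0:ℝ), F x = ∑' n, c n * x ^ n := by
    intro x hx
    rw [← hcF x hx]; simp only [hf]; rw [max_eq_left hx.le]
  have hFneg : ∀ x < (0:ℝ), F x = ∑' n, c n * (-x) ^ n := by
    intro x hx
    rw [← heven, hFpos (-x) (by linarith)]
  have hcont := aux_series_continuous c hc0 hcs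
  have hT : Tendsto F (nhdsWithin 0 {(0 : ℝ)}ᶜ) (nhds (∑' n, c n * |(0:ℝ)| ^ n)) := by
    have : Tendsto (fun x : ℝ => ∑' n, c n * |x| ^ n) (nhdsWithin 0 {(0 : ℝ)}ᶜ)
        (nhds (∑' n, c n * |(0:ℝ)| ^ n)) :=
      ((hcont.comp continuous_abs).tendsto 0).mono_left nhdsWithin_le_nhds
    refine this.congr' ?_
    filter_upwards [self_mem_nhdsWithin] with x hx
    rcases lt_or_gt_of_ne (show x ≠ 0 from hx) with h | h
    · rw [hFneg x h, abs_of_neg h]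
    · rw [hFpos x h, abs_of_pos h]
  refine ⟨fun x => ∑' n, c n * x ^ n, ⟨c, hc0, fun x => (hcs x).hasSum⟩, hFpos, hFneg,
    (key 0 0 le_rfl le_rfl).1, _, hT, ?_⟩
  refine ge_of_tendsto hT ?_
  filter_upwards with x
  rcases le_total 0 x with hx | hx
  · exact hmono 0 x le_rfl hx
  · rw [← heven x]; exact hmono 0 (-x) le_rfl (by linarith)

lemma aux_mul {s t : ℕ → ℝ} (hs : s ∈ momentSet (Icc 0 1)) (ht : t ∈ momentSet (Icc 0 1)) :
    (fun k => s k * t k) ∈ momentSet (Icc 0 1) := by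
  obtain ⟨μ, hμ, hμ0, hsm⟩ := hs
  obtain ⟨ν, hν, hν0, htm⟩ := ht
  have := aux_finite hμ
  have := aux_finite hν
  have hmeas : Measurable (fun z : ℝ × ℝ => z.1 * z.2) := by fun_prop
  have h0 : (Measure.map (fun z : ℝ × ℝ => z.1 * z.2) (μ.prod ν)) (Icc 0 1)ᶜ = 0 := by
    rw [Measure.map_apply hmeas measurableSet_Icc.compl]
    have h1 : ∀ᵐ z ∂(μ.prod ν), z.1 ∈ Icc (0:ℝ) 1 :=
      Measure.quasiMeasurePreserving_fst.ae (show ∀ᵐ x ∂μ, x ∈ Icc (0:ℝ) 1 from hμ0)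
    have h2 : ∀ᵐ z ∂(μ.prod ν), z.2 ∈ Icc (0:ℝ) 1 :=
      Measure.quasiMeasurePreserving_snd.ae (show ∀ᵐ x ∂ν, x ∈ Icc (0:ℝ) 1 from hν0)
    have h3 : ∀ᵐ z ∂(μ.prod ν), z.1 * z.2 ∈ Icc (0:ℝ) 1 := by
      filter_upwards [h1, h2] with z a b
      exact ⟨mul_nonneg a.1 b.1, mul_le_one₀ a.2 b.1 b.2⟩
    exact h3
  refine ⟨_, aux_adm01 h0, h0, fun k => ?_⟩
  rw [moment, integral_map hmeas.aemeasurable (by fun_prop)]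
  simp only [hsm, htm]
  simp_rw [mul_pow]
  rw [moment, moment, ← integral_prod_mul]

lemma aux_pow {s : ℕ → ℝ} (hs : s ∈ momentSet (Icc 0 1)) (n : ℕ) :
    (fun k => s k ^ n) ∈ momentSet (Icc 0 1) := by
  induction n with
  | zero =>
    have := momentSet_mono (L := Icc (0:ℝ) 1) (by intro x; simp; rintro rfl; norm_num)
      (aux_two_mem 1 0 1 1 zero_le_one le_rfl)
    simpa using this
  | succ n ih => simpa only [pow_succ] using aux_mul ih hs

lemma aux_comp {s : ℕ → ℝ} (hs : s ∈ momentSet (Icc 0 1)) (c : ℕ → ℝ) (hc : ∀ n, 0 ≤ c n)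
    (G : ℝ → ℝ) (hG : ∀ x : ℝ, HasSum (fun n => c n * x ^ n) (G x)) :
    (fun k => G (s k)) ∈ momentSet (Icc 0 1) := by
  choose μ hμ hμ0 hm using fun n => aux_pow hs n
  set M : Measure ℝ := Measure.sum (fun n => ENNReal.ofReal (c n) • μ n) with hM
  have h0 : M (Icc 0 1)ᶜ = 0 := by
    rw [hM, Measure.sum_apply _ measurableSet_Icc.compl]
    simp [hμ0]
  have hfin : IsFiniteMeasure M := by
    constructor
    rw [hM, Measure.sum_apply _ MeasurableSet.univ]
    have e : ∀ n, (ENNReal.ofReal (c n) • μ n) univ = ENNReal.ofReal (c n * s 0 ^ n) := by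
      intro n
      have := aux_finite (hμ n)
      have := hm n 0
      simp only [moment, pow_zero, integral_const, smul_eq_mul, mul_one] at this
      rw [ENNReal.ofReal_mul (hc n), this, ofReal_measureReal]
      simp
    simp_rw [e]
    have hnn : ∀ n, 0 ≤ c n * s 0 ^ n := by
      intro n
      have := aux_nonneg (ν := μ n) (measure_mono_null (compl_subset_compl.2 Icc_subset_Ici_self) (hμ0 n)) 0
      rw [← hm n 0] at this
      exact mul_nonneg (hc n) this
    rw [← ENNReal.ofReal_tsum_of_nonneg hnn (hG (s 0)).summable]
    exact ENNReal.ofReal_lt_top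
  have hadm := aux_adm01 h0
  refine ⟨M, hadm, h0, fun k => ?_⟩
  have := hasSum_integral_measure (hadm k)
  simp only [integral_smul_measure, smul_eq_mul] at this
  refine (hG (s k)).unique ?_
  have e : (fun n => c n * s k ^ n) =
      fun n => (ENNReal.ofReal (c n)).toReal * ∫ x, x ^ k ∂(μ n) := by
    funext n
    rw [ENNReal.toReal_ofReal (hc n)]
    exact congrArg _ (hm n k)
  rw [e]
  exact this

lemma aux_three_two (F G : ℝ → ℝ) (hG : AbsolutelyMonotonicEntire G) (h1 : ∀ x > (0 : ℝ), F x = G x)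
    (h2 : ∀ x < (0 : ℝ), F x = G (-x)) (h3 : 0 ≤ F 0) (L : ℝ)
    (hL : Tendsto F (nhdsWithin 0 {(0 : ℝ)}ᶜ) (nhds L)) (hFL : F 0 ≤ L)
    (s : ℕ → ℝ) (hs : s ∈ momentSet (Set.Icc (-1 : ℝ) 0)) :
    (fun k => F (s k)) ∈ momentSet (Set.Icc (0 : ℝ) 1) := by
  obtain ⟨c, hc, hcG⟩ := hG
  have hGc : Continuous G := by
    have := aux_series_continuous c hc (fun x => (hcG x).summable)
    convert this using 2 with x
    exact (hcG x).tsum_eq.symm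
  have hL' : L = G 0 := by
    have a1 : Tendsto F (nhdsWithin 0 (Ioi 0)) (nhds L) :=
      hL.mono_left (nhdsWithin_mono _ (fun x hx => ne_of_gt hx))
    have a2 : Tendsto F (nhdsWithin 0 (Ioi 0)) (nhds (G 0)) := by
      refine ((hGc.tendsto 0).mono_left nhdsWithin_le_nhds).congr' ?_
      filter_upwards [self_mem_nhdsWithin] with x hx
      exact (h1 x hx).symm
    exact tendsto_nhds_unique a1 a2
  have hGmono : ∀ x, 0 ≤ x → G 0 ≤ G x := by
    intro x hx
    refine hasSum_le (fun n => ?_) (hcG 0) (hcG x)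
    exact mul_le_mul_of_nonneg_left (pow_le_pow_left₀ le_rfl hx n) (hc n)
  obtain ⟨μ, hμ, hμ0, hm⟩ := hs
  have := aux_finite hμ
  have hae : ∀ᵐ x ∂μ, x ∈ Icc (-1:ℝ) 0 := hμ0
  have hmeas : Measurable (fun x : ℝ => -x) := measurable_neg
  have ht : (fun k => (-1) ^ k * s k) ∈ momentSet (Icc 0 1) := by
    have h0 : (Measure.map (fun x : ℝ => -x) μ) (Icc 0 1)ᶜ = 0 := by
      rw [Measure.map_apply hmeas measurableSet_Icc.compl]
      have : ∀ᵐ x ∂μ, -x ∈ Icc (0:ℝ) 1 := by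
        filter_upwards [hae] with x hx
        exact ⟨by linarith [hx.2], by linarith [hx.1]⟩
      exact this
    refine ⟨_, aux_adm01 h0, h0, fun k => ?_⟩
    rw [moment, integral_map hmeas.aemeasurable (by fun_prop)]
    simp only [hm, moment]
    rw [← integral_const_mul]
    congr 1; funext x; rw [neg_pow x]
  by_cases hz : ∀ᵐ x ∂μ, x = 0
  · have hs0 : ∀ k, s (k + 1) = 0 := by
      intro k
      rw [hm, moment]
      refine integral_eq_zero_of_ae ?_
      filter_upwards [hz] with x hx
      simp [hx]
    have hs00 : 0 ≤ s 0 := by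
      rw [hm, moment]; simp
    have hle : F 0 ≤ F (s 0) := by
      rcases hs00.eq_or_lt with h | h
      · rw [← h]
      · rw [h1 _ h]; linarith [hGmono (s 0) hs00]
    have := momentSet_mono (L := Icc (0:ℝ) 1) (by intro x; simp; rintro (rfl | rfl) <;> norm_num)
      (aux_two_mem (F 0) (F (s 0) - F 0) 1 0 h3 (by linarith))
    convert this using 2 with k
    cases k with
    | zero => simp
    | succ k => simp [hs0]
  · have hpos : ∀ k, 0 < (-1) ^ k * s k := by
      intro k
      have e : (-1) ^ k * s k = ∫ x, (-x) ^ k ∂μ := by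
        rw [hm, moment, ← integral_const_mul]
        congr 1; funext x; rw [neg_pow x]
      have hnn : 0 ≤ᵐ[μ] fun x => (-x) ^ k := by
        filter_upwards [hae] with x hx
        exact pow_nonneg (by linarith [hx.2]) k
      have hi : Integrable (fun x : ℝ => (-x) ^ k) μ := by
        have := (hμ k).const_mul ((-1) ^ k)
        refine this.congr (Eventually.of_forall fun x => ?_)
        simp only [neg_pow x]
      have hne : ∫ x, (-x) ^ k ∂μ ≠ 0 := by
        intro h
        rw [integral_eq_zero_iff_of_nonneg_ae hnn hi] at h
        apply hz
        filter_upwards [h] with x hx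
        simp only [Pi.zero_apply] at hx
        exact neg_eq_zero.1 (by by_contra hne; exact pow_ne_zero k hne hx)
      rw [e]
      exact lt_of_le_of_ne (integral_nonneg_of_ae hnn) hne.symm
    have := aux_comp ht c hc G hcG
    convert this using 2 with k
    have hk := hpos k
    rcases neg_one_pow_eq_or ℝ k with h | h
    · rw [h, one_mul] at hk ⊢
      exact h1 _ hk
    · rw [h] at hk ⊢
      rw [h2 _ (by linarith), neg_one_mul]

/-- Classification of the entrywise transformers sending `M([-1,0])` to `M([0,1])`
(even case). -/
theorem moment_transform_Icc_neg_one_zero_even_TFAE (u₀ : ℝ) (hu₀ : u₀ ∈ Set.Ioo (0 : ℝ) 1)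
    (F : ℝ → ℝ) :
    List.TFAE
      [(∀ s ∈ momentSet ({-1, -u₀} : Set ℝ),
          (fun k => F (s k)) ∈ momentSet (Set.Ici (0 : ℝ))) ∧
        (∀ s ∈ truncMomentSet 4 ({-1, 0} : Set ℝ),
          (fun k => F (s k)) ∈ truncMomentSet 4 (Set.Ici (0 : ℝ))) ∧
        (∀ u ∈ Set.Ioo (0 : ℝ) 1, ∀ s ∈ truncMomentSet 4 ({-u} : Set ℝ),
          (fun k => F (s k)) ∈ truncMomentSet 4 (Set.Ici (0 : ℝ))),
        ∀ s ∈ momentSet (Set.Icc (-1 : ℝ) 0),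
          (fun k => F (s k)) ∈ momentSet (Set.Icc (0 : ℝ) 1),
        ∃ G : ℝ → ℝ, AbsolutelyMonotonicEntire G ∧ (∀ x > (0 : ℝ), F x = G x) ∧
          (∀ x < (0 : ℝ), F x = G (-x)) ∧ 0 ≤ F 0 ∧
          ∃ L : ℝ, Tendsto F (nhdsWithin 0 {(0 : ℝ)}ᶜ) (nhds L) ∧ F 0 ≤ L] := by
  tfae_have 1 → 3 := fun h => aux_one_three u₀ hu₀ F h.1 h.2.1
  tfae_have 3 → 2 := by
    rintro ⟨G, hG, h1, h2, h3, L, hL, hFL⟩ s hs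
    exact aux_three_two F G hG h1 h2 h3 L hL hFL s hs
  tfae_have 2 → 1 := by
    intro h
    have hI : Icc (0:ℝ) 1 ⊆ Ici 0 := Icc_subset_Ici_self
    have htr : ∀ K : Set ℝ, K ⊆ Icc (-1:ℝ) 0 → ∀ s ∈ truncMomentSet 4 K,
        (fun k => F (s k)) ∈ truncMomentSet 4 (Set.Ici (0 : ℝ)) := by
      rintro K hK s ⟨μ, hμ, hμ0, hm⟩
      obtain ⟨ν, hν, hν0, hn⟩ := momentSet_mono hI
        (h (moment μ) (momentSet_mono hK ⟨μ, hμ, hμ0, fun _ => rfl⟩))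
      exact ⟨ν, hν, hν0, fun k => by simp only [← hn k, hm k]⟩
    obtain ⟨hu0, hu1⟩ := hu₀
    refine ⟨fun s hs => momentSet_mono hI (h s (momentSet_mono ?_ hs)), htr _ ?_,
      fun u hu => htr _ ?_⟩
    · rintro x (rfl | rfl)
      · norm_num
      · exact ⟨by linarith, by linarith⟩
    · rintro x (rfl | rfl) <;> norm_num
    · rintro x rfl
      exact ⟨by linarith [hu.2], by linarith [hu.1]⟩
  tfae_finish
end

section
/- Let F : (0,ρ) → ℝ where 0 < ρ ≤ ∞, fix u₀ ∈ (0,1) and an integer N ≥ 3, and set u := (1, u₀, …, u₀^{N−1})ᵀ ∈ ℝᴺ. Suppose that F applied entrywise maps every 2×2 positive semidefinite matrix with entries in (0,ρ) to a positive semidefinite matrix, and that F[A] is positive semidefinite for every N×N matrix A = a·𝟏_{N×N} + b·uuᵀ with a ∈ [0,ρ), b ∈ [0,ρ−a), and 0 < a+b < ρ. Then F is (N−3)-times continuously differentiable on (0,ρ) with F^{(k)}(x) ≥ 0 for all x ∈ (0,ρ) and 0 ≤ k ≤ N−3, and F^{(N−3)} is convex and non-decreasing on (0,ρ). If moreover F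 is (N−1)-times continuously differentiable on (0,ρ), then F^{(k)}(x) ≥ 0 for all x ∈ (0,ρ) and 0 ≤ k ≤ N−1. Finally, if F is continuous on (0,ρ), the assumption that F preserves positive semidefiniteness of 2×2 matrices is not needed. -/
open Filter Set
open scoped ENNReal

/-- The interval `(0, ρ)` inside `ℝ`, for an extended parameter `0 < ρ ≤ ∞`. -/
def openSeg (ρ : ℝ≥0∞) : Set ℝ := {x : ℝ | 0 < x ∧ ENNReal.ofReal x < ρ}

def HH.base (c d : ℝ) (f : ℝ → ℝ) : Prop :=
  (∀ x ∈ Ioo c d, 0 ≤ f x) ∧ MonotoneOn f (Ioo c d) ∧ ConvexOn ℝ (Ioo c d) f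

def HH.CM : ℕ → ℝ → ℝ → (ℝ → ℝ) → Prop
  | 0, c, d, f => HH.base c d f
  | n+1, c, d, f => HH.base c d f ∧ ∀ h, 0 < h → HH.CM n c (d - h) (fun x => f (x + h) - f x)

namespace HH
open Topology

lemma CM.base {n : ℕ} {c d : ℝ} {f : ℝ → ℝ} (h : CM n c d f) : base c d f := by
  cases n with
  | zero => exact h
  | succ n => exact h.1

lemma base.lim {ι : Type*} {l : Filter ι} [l.NeBot] {c d : ℝ} {f : ℝ → ℝ} {g : ι → ℝ → ℝ}
    (hg : ∀ᶠ i in l, HH.base c d (g i)) (hl : ∀ x ∈ Ioo c d, Tendsto (fun i => g i x) l (𝓝 (f x))) :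
    HH.base c d f := by
  refine ⟨fun x hx => ?_, fun x hx y hy hxy => ?_, convex_Ioo c d, fun x hx y hy a b ha hb hab => ?_⟩
  · exact ge_of_tendsto (hl x hx) (hg.mono fun i hi => hi.1 x hx)
  · exact le_of_tendsto_of_tendsto (hl x hx) (hl y hy) (hg.mono fun i hi => hi.2.1 hx hy hxy)
  · have hz := convex_Ioo c d hx hy ha hb hab
    exact le_of_tendsto_of_tendsto (hl _ hz) (((hl x hx).const_smul a).add ((hl y hy).const_smul b))
      (hg.mono fun i hi => hi.2.2.2 hx hy ha hb hab)

lemma CM.lim {ι : Type*} {l : Filter ι} [l.NeBot] {n : ℕ} : ∀ {c d : ℝ} {f : ℝ → ℝ} {g : ι → ℝ → ℝ},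
    (∀ᶠ i in l, CM n c d (g i)) → (∀ x ∈ Ioo c d, Tendsto (fun i => g i x) l (𝓝 (f x))) →
    CM n c d f := by
  induction n with
  | zero => intro c d f g hg hl; exact HH.base.lim hg hl
  | succ n ih =>
    intro c d f g hg hl
    refine ⟨HH.base.lim (hg.mono fun i hi => hi.1) hl, fun h hh => ih (hg.mono fun i hi => hi.2 h hh) ?_⟩
    intro x hx
    exact (hl (x + h) ⟨by linarith [hx.1], by linarith [hx.2]⟩).sub (hl x ⟨hx.1, by linarith [hx.2]⟩)

lemma CM.smul {n : ℕ} {k : ℝ} (hk : 0 ≤ k) : ∀ {c d : ℝ} {f : ℝ → ℝ},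
    CM n c d f → CM n c d (fun x => k * f x) := by
  have key : ∀ {c d : ℝ} {f : ℝ → ℝ}, HH.base c d f → HH.base c d (fun x => k * f x) := by
    intro c d f hf
    exact ⟨fun x hx => mul_nonneg hk (hf.1 x hx),
      fun x hx y hy hxy => mul_le_mul_of_nonneg_left (hf.2.1 hx hy hxy) hk, hf.2.2.smul hk⟩
  induction n with
  | zero => intro c d f hf; exact key hf
  | succ n ih =>
    intro c d f hf
    refine ⟨key hf.1, fun h hh => ?_⟩
    have := ih (hf.2 h hh)
    simpa only [mul_sub] using this

lemma base.exh {c d : ℝ} {f : ℝ → ℝ} (h : ∀ d' < d, HH.base c d' f) : HH.base c d f := by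
  refine ⟨fun x hx => ?_, fun x hx y hy hxy => ?_, convex_Ioo c d, fun x hx y hy a b ha hb hab => ?_⟩
  · obtain ⟨e, he1, he2⟩ := exists_between hx.2
    exact (h e he2).1 x ⟨hx.1, he1⟩
  · obtain ⟨e, he1, he2⟩ := exists_between hy.2
    exact (h e he2).2.1 ⟨hx.1, by linarith⟩ ⟨hy.1, he1⟩ hxy
  · obtain ⟨e, he1, he2⟩ := exists_between (max_lt hx.2 hy.2)
    exact (h e he2).2.2.2 ⟨hx.1, (le_max_left _ _).trans_lt he1⟩
      ⟨hy.1, (le_max_right _ _).trans_lt he1⟩ ha hb hab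

lemma CM.exh {n : ℕ} : ∀ {c d : ℝ} {f : ℝ → ℝ}, (∀ d' < d, CM n c d' f) → CM n c d f := by
  induction n with
  | zero => intro c d f h; exact HH.base.exh h
  | succ n ih =>
    intro c d f h
    refine ⟨HH.base.exh fun d' hd' => (h d' hd').1, fun k hk => ih fun e he => ?_⟩
    have := (h (e + k) (by linarith)).2 k hk
    simpa using this

lemma base.mono {c d c' d' : ℝ} {f : ℝ → ℝ} (hf : HH.base c d f) (hc : c ≤ c') (hd : d' ≤ d) :
    HH.base c' d' f := by
  have hs : Ioo c' d' ⊆ Ioo c d := Ioo_subset_Ioo hc hd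
  exact ⟨fun x hx => hf.1 x (hs hx), hf.2.1.mono hs, hf.2.2.subset hs (convex_Ioo _ _)⟩

lemma CM.mono {n : ℕ} : ∀ {c d c' d' : ℝ} {f : ℝ → ℝ}, CM n c d f → c ≤ c' → d' ≤ d →
    CM n c' d' f := by
  induction n with
  | zero => intro c d c' d' f h hc hd; exact HH.base.mono h hc hd
  | succ n ih =>
    intro c d c' d' f h hc hd
    exact ⟨HH.base.mono h.1 hc hd, fun k hk => ih (h.2 k hk) hc (by linarith)⟩

/-- smooth functions -/
lemma base_of_smooth {c d : ℝ} {f : ℝ → ℝ} (hf : ContDiff ℝ (⊤ : ℕ∞) f)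
    (h : ∀ k ≤ 2, ∀ x ∈ Ioo c d, 0 ≤ iteratedDeriv k f x) : HH.base c d f := by
  have hf1 : Differentiable ℝ f := hf.differentiable (by simp)
  have hf2 : Differentiable ℝ (deriv f) := by
    have := hf.differentiable_iteratedDeriv 1 (by exact_mod_cast (ENat.natCast_lt_top 1))
    simpa using this
  refine ⟨fun x hx => by simpa using h 0 (by simp) x hx, ?_, ?_⟩
  · refine monotoneOn_of_deriv_nonneg (convex_Ioo _ _) hf1.continuous.continuousOn
      hf1.differentiableOn fun x hx => ?_
    rw [interior_Ioo] at hx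
    simpa using h 1 (by simp) x hx
  · refine convexOn_of_deriv2_nonneg' (convex_Ioo _ _) hf1.differentiableOn hf2.differentiableOn
      fun x hx => ?_
    simpa [iteratedDeriv_eq_iterate] using h 2 (by simp) x hx

lemma CM_of_smooth {n : ℕ} : ∀ {c d : ℝ} {f : ℝ → ℝ}, ContDiff ℝ (⊤ : ℕ∞) f →
    (∀ k ≤ n + 2, ∀ x ∈ Ioo c d, 0 ≤ iteratedDeriv k f x) → CM n c d f := by
  induction n with
  | zero => intro c d f hf h; exact base_of_smooth hf h
  | succ n ih =>
    intro c d f hf h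
    refine ⟨base_of_smooth hf fun k hk => h k (by omega), fun t ht => ?_⟩
    have hs : ContDiff ℝ (⊤ : ℕ∞) (fun x => f (x + t)) := hf.comp (contDiff_id.add contDiff_const)
    refine ih (hs.sub hf) fun k hk x hx => ?_
    have hle : ((k : ℕ∞) : WithTop ℕ∞) ≤ ((⊤ : ℕ∞) : WithTop ℕ∞) := by exact_mod_cast le_top
    have e : iteratedDeriv k (fun x => f (x + t) - f x) x
        = iteratedDeriv k f (x + t) - iteratedDeriv k f x := by
      have := iteratedDeriv_sub (n := k) (x := x) (hs.of_le hle).contDiffAt (hf.of_le hle).contDiffAt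
      rw [iteratedDeriv_comp_add_const] at this
      exact this
    rw [e, sub_nonneg]
    have hd : Differentiable ℝ (iteratedDeriv k f) :=
      hf.differentiable_iteratedDeriv k (by exact_mod_cast (ENat.natCast_lt_top k))
    have hm : MonotoneOn (iteratedDeriv k f) (Ioo c d) := by
      refine monotoneOn_of_deriv_nonneg (convex_Ioo _ _) hd.continuous.continuousOn
        hd.differentiableOn fun x hx => ?_
      rw [interior_Ioo] at hx
      have := h (k+1) (by omega) x hx
      rwa [iteratedDeriv_succ] at this
    exact hm ⟨hx.1, by linarith [hx.2]⟩ ⟨by linarith [hx.1], by linarith [hx.2]⟩ (by linarith)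

lemma CM.regular {n : ℕ} : ∀ {c d : ℝ} {f : ℝ → ℝ}, CM n c d f →
    ContDiffOn ℝ n f (Ioo c d) ∧ (∀ k ≤ n, ∀ x ∈ Ioo c d, 0 ≤ iteratedDeriv k f x) ∧
    HH.base c d (iteratedDeriv n f) := by
  induction n with
  | zero =>
    intro c d f h
    have h' : HH.base c d f := h
    refine ⟨?_, ?_, by simpa using h'⟩
    · have := h'.2.2.continuousOn isOpen_Ioo
      simpa using this
    · intro k hk x hx
      obtain rfl : k = 0 := by omega
      simpa using h'.1 x hx
  | succ n ih =>
    intro c d f h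
    have hconv := h.1.2.2
    set G : ℝ → ℝ := fun x => derivWithin f (Ioi x) x with hG
    have hint : interior (Ioo c d) = Ioo c d := interior_Ioo
    have hr : ∀ x ∈ Ioo c d, HasDerivWithinAt f (G x) (Ioi x) x := fun x hx =>
      hconv.hasDerivWithinAt_rightDeriv_of_mem_interior (by rwa [hint])
    have hCM : CM n c d G := by
      refine CM.exh fun d' hd' => ?_
      refine CM.lim (l := 𝓝[>] (0:ℝ)) (g := fun t x => t⁻¹ * (f (x + t) - f x)) ?_ ?_
      · have : Ioo (0:ℝ) (d - d') ∈ 𝓝[>] (0:ℝ) := Ioo_mem_nhdsGT (by linarith)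
        filter_upwards [this] with t ht
        exact CM.smul (inv_nonneg.2 ht.1.le) ((h.2 t ht.1).mono le_rfl (by linarith [ht.2]))
      · intro x hx
        have h1 := (hasDerivWithinAt_iff_tendsto_slope' (by simp)).1 (hr x ⟨hx.1, hx.2.trans hd'⟩)
        have h2 : Tendsto (fun t : ℝ => x + t) (𝓝[>] 0) (𝓝[>] x) := by
          refine tendsto_nhdsWithin_iff.2 ⟨?_, ?_⟩
          · have : Tendsto (fun t : ℝ => x + t) (𝓝 0) (𝓝 (x + 0)) :=
              (continuous_const.add continuous_id).tendsto 0
            rw [add_zero] at this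
            exact this.mono_left nhdsWithin_le_nhds
          · filter_upwards [self_mem_nhdsWithin] with t ht
            have : 0 < t := ht
            simpa using this
        refine (h1.comp h2).congr fun t => ?_
        simp [slope_def_field, div_eq_inv_mul]
    have hGc : ContinuousOn G (Ioo c d) := hCM.base.2.2.continuousOn isOpen_Ioo
    have hder : ∀ x ∈ Ioo c d, HasDerivAt f (G x) x := by
      intro x hx
      have hl : HasDerivWithinAt f (G x) (Iio x) x := by
        rw [hasDerivWithinAt_iff_tendsto_slope' (by simp)]
        have hmem : Ioo c x ∈ 𝓝[<] x := Ioo_mem_nhdsLT hx.1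
        refine tendsto_of_tendsto_of_tendsto_of_le_of_le' (g := G) (h := fun _ => G x)
          ?_ tendsto_const_nhds ?_ ?_
        · exact (hGc.continuousAt (Ioo_mem_nhds hx.1 hx.2)).tendsto.mono_left nhdsWithin_le_nhds
        · filter_upwards [hmem] with y hy
          have := hconv.rightDeriv_le_slope_of_mem_interior (x := y) (y := x)
            (by rw [hint]; exact ⟨hy.1, hy.2.trans hx.2⟩) hx hy.2
          rwa [slope_comm] at this
        · filter_upwards [hmem] with y hy
          have := hconv.slope_le_leftDeriv_of_mem_interior (x := y) (y := x)
            ⟨hy.1, hy.2.trans hx.2⟩ (by rwa [hint]) hy.2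
          rw [slope_comm] at this
          exact this.trans (hconv.leftDeriv_le_rightDeriv_of_mem_interior (by rwa [hint]))
      have := (hasDerivWithinAt_Iio_iff_Iic.1 hl).union (hasDerivWithinAt_Ioi_iff_Ici.1 (hr x hx))
      rw [Iic_union_Ici] at this
      exact hasDerivWithinAt_univ.1 this
    have hEq : EqOn (deriv f) G (Ioo c d) := fun x hx => (hder x hx).deriv
    obtain ⟨i1, i2, i3⟩ := ih hCM
    have hit : ∀ k, EqOn (iteratedDeriv (k+1) f) (iteratedDeriv k G) (Ioo c d) := by
      intro k
      rw [iteratedDeriv_succ']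
      exact hEq.iteratedDeriv_of_isOpen isOpen_Ioo k
    refine ⟨?_, ?_, ?_⟩
    · push_cast
      rw [contDiffOn_succ_iff_deriv_of_isOpen isOpen_Ioo]
      exact ⟨fun x hx => (hder x hx).differentiableAt.differentiableWithinAt, by simp,
        i1.congr hEq⟩
    · intro k hk x hx
      cases k with
      | zero => simpa using h.1.1 x hx
      | succ k => rw [hit k hx]; exact i2 k (by omega) x hx
    · refine ⟨fun x hx => ?_, fun x hx y hy hxy => ?_, i3.2.2.congr (hit n).symm⟩
      · rw [hit n hx]; exact i3.1 x hx
      · rw [hit n hx, hit n hy]; exact i3.2.1 hx hy hxy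

lemma iter_g {N : ℕ} {f : ℝ → ℝ} (hf : ContDiff ℝ (⊤ : ℕ∞) f) (w : Fin N → Fin N → ℝ)
    (s : Fin N → Fin N → ℝ) (x : ℝ) (k : ℕ) :
    iteratedDeriv k (fun t => ∑ i, ∑ j, w i j * f (x + t * s i j)) =
      fun t => ∑ i, ∑ j, w i j * s i j ^ k * iteratedDeriv k f (x + t * s i j) := by
  induction k with
  | zero => simp
  | succ k ih =>
    rw [iteratedDeriv_succ, ih]
    funext t
    have hd : Differentiable ℝ (iteratedDeriv k f) :=
      hf.differentiable_iteratedDeriv k (by exact_mod_cast (ENat.natCast_lt_top k))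
    refine HasDerivAt.deriv ?_
    refine HasDerivAt.fun_sum fun i _ => HasDerivAt.fun_sum fun j _ => ?_
    have h1 : HasDerivAt (fun t : ℝ => x + t * s i j) (s i j) t := by
      simpa using ((hasDerivAt_id t).mul_const (s i j)).const_add x
    have h2 : HasDerivAt (iteratedDeriv k f) (iteratedDeriv (k+1) f (x + t * s i j)) (x + t * s i j) := by
      rw [iteratedDeriv_succ]; exact (hd _).hasDerivAt
    have := (h2.comp t h1).const_mul (w i j * s i j ^ k)
    exact this.congr_deriv (by ring)

lemma exists_vec {u : ℝ} (hu : u ∈ Ioo (0:ℝ) 1) {N K : ℕ} (hK : K < N) :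
    ∃ v : Fin N → ℝ, (∀ m < K, ∑ i, v i * (u ^ (i : ℕ)) ^ m = 0) ∧
      ∑ i, v i * (u ^ (i : ℕ)) ^ K ≠ 0 := by
  let p : Polynomial ℝ := ∏ m ∈ Finset.range K, (Polynomial.X - Polynomial.C (u ^ m))
  have hdeg : p.natDegree < N := by
    have : p.natDegree = K := by
      simp only [p]
      rw [Polynomial.natDegree_prod_of_monic _ _ (fun i _ => Polynomial.monic_X_sub_C _)]
      simp only [Polynomial.natDegree_X_sub_C]
      simp
    omega
  have hev : ∀ m, ∑ i : Fin N, p.coeff i * (u ^ (i : ℕ)) ^ m = p.eval (u ^ m) := by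
    intro m
    rw [Polynomial.eval_eq_sum_range' hdeg, Finset.sum_range]
    refine Finset.sum_congr rfl fun i _ => ?_
    rw [← pow_mul, ← pow_mul, mul_comm m]
  refine ⟨fun i => p.coeff i, fun m hm => ?_, ?_⟩
  · rw [hev]
    simp only [p, Polynomial.eval_prod]
    exact Finset.prod_eq_zero (Finset.mem_range.2 hm) (by simp)
  · rw [hev]
    simp only [p, Polynomial.eval_prod]
    refine Finset.prod_ne_zero_iff.2 fun m hm => ?_
    simp only [Polynomial.eval_sub, Polynomial.eval_X, Polynomial.eval_C]
    have : u ^ K < u ^ m := pow_lt_pow_right_of_lt_one₀ hu.1 hu.2 (Finset.mem_range.1 hm)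
    exact (sub_neg.2 this).ne

lemma deriv_nonneg {u : ℝ} (hu : u ∈ Ioo (0:ℝ) 1) {N K : ℕ} (hK : K < N) {f : ℝ → ℝ}
    (hf : ContDiff ℝ (⊤ : ℕ∞) f) {x ε : ℝ} (hε : 0 < ε)
    (h : ∀ v : Fin N → ℝ, ∀ t, 0 ≤ t → t < ε →
      0 ≤ ∑ i, ∑ j, v i * v j * f (x + t * (u ^ (i : ℕ) * u ^ (j : ℕ)))) :
    0 ≤ iteratedDeriv K f x := by
  obtain ⟨v, hv0, hv1⟩ := exists_vec hu hK
  set g : ℝ → ℝ := fun t => ∑ i, ∑ j, v i * v j * f (x + t * (u ^ (i : ℕ) * u ^ (j : ℕ))) with hg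
  have hit := iter_g hf (fun i j => v i * v j) (fun i j : Fin N => u ^ (i : ℕ) * u ^ (j : ℕ)) x
  have hg0 : ∀ k, iteratedDeriv k g 0 = (∑ i, v i * (u ^ (i : ℕ)) ^ k) ^ 2 * iteratedDeriv k f x := by
    intro k
    rw [hg, hit k, sq, Finset.sum_mul_sum, Finset.sum_mul]
    refine Finset.sum_congr rfl fun i _ => ?_
    rw [Finset.sum_mul]
    refine Finset.sum_congr rfl fun j _ => ?_
    simp only [zero_mul, add_zero, mul_pow]
    ring
  have hgs : ContDiff ℝ (⊤ : ℕ∞) g := by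
    refine ContDiff.sum fun i _ => ContDiff.sum fun j _ => contDiff_const.mul (hf.comp ?_)
    exact contDiff_const.add (contDiff_id.mul contDiff_const)
  have hpos : 0 ≤ iteratedDeriv K g 0 := by
    cases K with
    | zero => simpa [hg] using h v 0 le_rfl hε
    | succ n =>
      by_contra hneg
      push Not at hneg
      have hle : (((n+1 : ℕ) : ℕ∞) : WithTop ℕ∞) ≤ ((⊤ : ℕ∞) : WithTop ℕ∞) := by exact_mod_cast le_top
      have hc : Continuous (iteratedDeriv (n+1) g) := hgs.continuous_iteratedDeriv (n+1) hle
      have hev : ∀ᶠ t in 𝓝 (0:ℝ), iteratedDeriv (n+1) g t < 0 :=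
        hc.continuousAt.eventually_lt_const hneg
      obtain ⟨δ, hδ, hball⟩ := Metric.eventually_nhds_iff.1 hev
      set t := min δ ε / 2 with ht
      have ht0 : 0 < t := by positivity
      have htδ : t < δ := by have := min_le_left δ ε; linarith [lt_min hδ hε]
      have htε : t < ε := by have := min_le_right δ ε; linarith [lt_min hδ hε]
      obtain ⟨y, hy, hyeq⟩ := taylor_mean_remainder_lagrange_iteratedDeriv (n := n) ht0.ne
        (hgs.of_le hle).contDiffOn
      rw [uIoo_of_le ht0.le] at hy
      have htay : taylorWithinEval g n (uIcc 0 t) 0 t = 0 := by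
        rw [taylor_within_apply]
        refine Finset.sum_eq_zero fun k hk => ?_
        have hk' : k < n + 1 := Finset.mem_range.1 hk
        have : iteratedDerivWithin k g (uIcc 0 t) 0 = iteratedDeriv k g 0 := by
          refine iteratedDerivWithin_eq_iteratedDeriv (uniqueDiffOn_uIcc ht0.ne) ?_ left_mem_uIcc
          exact (hgs.of_le (by exact_mod_cast le_top)).contDiffAt
        rw [this, hg0, hv0 k hk']
        simp
      rw [htay, sub_zero, sub_zero] at hyeq
      have h1 : 0 ≤ g t := h v t ht0.le htε
      have h2 : iteratedDeriv (n+1) g y < 0 := hball (by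
        rw [Real.dist_eq, sub_zero, abs_of_pos hy.1]; exact hy.2.trans htδ)
      rw [hyeq] at h1
      have h3 : iteratedDeriv (n+1) g y * t ^ (n+1) / ((n+1).factorial : ℝ) < 0 :=
        div_neg_of_neg_of_pos (mul_neg_of_neg_of_pos h2 (by positivity)) (by positivity)
      linarith
  rw [hg0] at hpos
  exact nonneg_of_mul_nonneg_right hpos (by positivity)

/-- mollification -/
lemma CM_of_cont {u : ℝ} (hu : u ∈ Ioo (0:ℝ) 1) {n : ℕ} {F : ℝ → ℝ} (hF : Continuous F)
    {c d c' d' : ℝ} (hc : c' < c) (hd : d < d')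
    (h : ∀ v : Fin (n+3) → ℝ, ∀ a t, c' ≤ a → 0 ≤ t → a + t ≤ d' →
      0 ≤ ∑ i, ∑ j, v i * v j * F (a + t * (u ^ (i : ℕ) * u ^ (j : ℕ)))) :
    CM n c d F := by
  let φ : ℕ → ContDiffBump (0:ℝ) := fun m =>
    ⟨1 / ((m:ℝ) + 1) / 2, 1 / ((m:ℝ) + 1), by positivity, by
      have : 0 < 1 / ((m:ℝ) + 1) := by positivity
      linarith⟩
  have hφ : Tendsto (fun m => (φ m).rOut) atTop (𝓝 0) := tendsto_one_div_add_atTop_nhds_zero_nat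
  let f : ℕ → ℝ → ℝ := fun m =>
    MeasureTheory.convolution ((φ m).normed MeasureTheory.volume) F
      (ContinuousLinearMap.lsmul ℝ ℝ) MeasureTheory.volume
  refine CM.lim (l := atTop) (g := f) ?_ fun x _ =>
    ContDiffBump.convolution_tendsto_right_of_continuous hφ hF x
  have hδ : 0 < min (c - c') (d' - d) := lt_min (by linarith) (by linarith)
  filter_upwards [hφ.eventually_lt_const hδ] with m hm
  have hm1 := hm.trans_le (min_le_left _ _)
  have hm2 := hm.trans_le (min_le_right _ _)
  have hsm : ContDiff ℝ (⊤ : ℕ∞) (f m) :=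
    (φ m).hasCompactSupport_normed.contDiff_convolution_left _ (φ m).contDiff_normed
      hF.locallyIntegrable
  refine CM_of_smooth hsm fun k hk x hx => ?_
  have hε : 0 < d' - (φ m).rOut - x := by linarith [hx.2]
  refine deriv_nonneg hu (N := n+3) (by omega) hsm hε fun v t ht0 ht1 => ?_
  have hint : ∀ y, MeasureTheory.Integrable
      (fun s => (φ m).normed MeasureTheory.volume s * F (y - s)) := by
    intro y
    refine Continuous.integrable_of_hasCompactSupport ?_ ?_
    · exact (φ m).continuous_normed.mul (hF.comp (continuous_const.sub continuous_id))
    · exact (φ m).hasCompactSupport_normed.mul_right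
  have hfy : ∀ y, f m y = ∫ s, (φ m).normed MeasureTheory.volume s * F (y - s) := by
    intro y; rfl
  have e : ∑ i, ∑ j, v i * v j * f m (x + t * (u ^ (i : ℕ) * u ^ (j : ℕ))) =
      ∫ s, (φ m).normed MeasureTheory.volume s *
        ∑ i, ∑ j, v i * v j * F ((x - s) + t * (u ^ (i : ℕ) * u ^ (j : ℕ))) := by
    simp only [hfy, Finset.mul_sum]
    rw [MeasureTheory.integral_finsetSum]
    · refine Finset.sum_congr rfl fun i _ => ?_
      rw [MeasureTheory.integral_finsetSum]
      · refine Finset.sum_congr rfl fun j _ => ?_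
        rw [← MeasureTheory.integral_const_mul]
        congr 1
        funext s
        rw [show x + t * (u ^ (i : ℕ) * u ^ (j : ℕ)) - s = (x - s) + t * (u ^ (i : ℕ) * u ^ (j : ℕ)) by ring]
        ring
      · intro j _
        refine ((hint (x + t * (u ^ (i : ℕ) * u ^ (j : ℕ)))).const_mul (v i * v j)).congr ?_
        refine Eventually.of_forall fun s => ?_
        simp only
        rw [show x + t * (u ^ (i : ℕ) * u ^ (j : ℕ)) - s = (x - s) + t * (u ^ (i : ℕ) * u ^ (j : ℕ)) by ring]
        ring
    · intro i _
      refine MeasureTheory.integrable_finsetSum _ fun j _ => ?_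
      refine ((hint (x + t * (u ^ (i : ℕ) * u ^ (j : ℕ)))).const_mul (v i * v j)).congr ?_
      refine Eventually.of_forall fun s => ?_
      simp only
      rw [show x + t * (u ^ (i : ℕ) * u ^ (j : ℕ)) - s = (x - s) + t * (u ^ (i : ℕ) * u ^ (j : ℕ)) by ring]
      ring
  rw [e]
  refine MeasureTheory.integral_nonneg fun s => ?_
  by_cases hs : s ∈ Metric.ball (0:ℝ) (φ m).rOut
  · rw [Metric.mem_ball, Real.dist_eq, sub_zero, abs_lt] at hs
    refine mul_nonneg ((φ m).nonneg_normed s) (h v _ t ?_ ht0 ?_)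
    · linarith [hx.1, hs.2]
    · linarith [hs.1]
  · have : (φ m).normed MeasureTheory.volume s = 0 := by
      rw [← (φ m).support_normed_eq (μ := MeasureTheory.volume)] at hs
      exact Function.notMem_support.1 hs
    simp [this]

lemma seg_of_le {ρ : ℝ≥0∞} {x y : ℝ} (hx : 0 < x) (hxy : x ≤ y) (hy : ENNReal.ofReal y < ρ) :
    x ∈ openSeg ρ := ⟨hx, (ENNReal.ofReal_le_ofReal hxy).trans_lt hy⟩

lemma seg_open (ρ : ℝ≥0∞) : IsOpen (openSeg ρ) := by
  have : openSeg ρ = Ioi 0 ∩ ENNReal.ofReal ⁻¹' (Iio ρ) := rfl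
  rw [this]
  exact isOpen_Ioi.inter (isOpen_Iio.preimage ENNReal.continuous_ofReal)

lemma seg_up {ρ : ℝ≥0∞} {x : ℝ} (hx : x ∈ openSeg ρ) : ∃ d, x < d ∧ d ∈ openSeg ρ := by
  have h := (seg_open ρ).mem_nhds hx
  obtain ⟨d, h1, h2⟩ := Filter.nonempty_of_mem
    (inter_mem (mem_nhdsWithin_of_mem_nhds h) (self_mem_nhdsWithin (a := x) (s := Ioi x)))
  exact ⟨d, h2, h1⟩

lemma two_mat {p q r : ℝ} (hp : 0 ≤ p) (hr : 0 ≤ r) (h : q ^ 2 ≤ p * r) :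
    (!![p, q; q, r] : Matrix (Fin 2) (Fin 2) ℝ).PosSemidef := by
  refine Matrix.PosSemidef.of_dotProduct_mulVec_nonneg ?_ fun x => ?_
  · ext i j; fin_cases i <;> fin_cases j <;> simp
  · simp [Matrix.mulVec, dotProduct, Fin.sum_univ_two]
    rcases hp.eq_or_lt with h0 | h0
    · subst h0
      have : q = 0 := by nlinarith [sq_nonneg q]
      subst this
      nlinarith [mul_nonneg hr (sq_nonneg (x 1))]
    · have : 0 ≤ p * (x 0 * (p * x 0 + q * x 1) + x 1 * (q * x 0 + r * x 1)) := by
        nlinarith [sq_nonneg (p * x 0 + q * x 1), mul_nonneg (sub_nonneg.2 h) (sq_nonneg (x 1))]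
      exact nonneg_of_mul_nonneg_right this h0

lemma two_inv {p q r : ℝ} (h : (!![p, q; q, r] : Matrix (Fin 2) (Fin 2) ℝ).PosSemidef) :
    0 ≤ p ∧ 0 ≤ r ∧ q ^ 2 ≤ p * r := by
  have hd := h.det_nonneg
  rw [Matrix.det_fin_two_of] at hd
  have h0 := h.diag_nonneg (i := 0)
  have h1 := h.diag_nonneg (i := 1)
  exact ⟨by simpa using h0, by simpa using h1, by nlinarith⟩

lemma cont_of_two {ρ : ℝ≥0∞} {F : ℝ → ℝ}
    (h : ∀ A : Matrix (Fin 2) (Fin 2) ℝ, A.PosSemidef → (∀ i j, A i j ∈ openSeg ρ) →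
        (A.map F).PosSemidef) : ContinuousOn F (openSeg ρ) := by
  have key : ∀ p q r, p ∈ openSeg ρ → q ∈ openSeg ρ → r ∈ openSeg ρ → q ^ 2 ≤ p * r →
      0 ≤ F p ∧ 0 ≤ F r ∧ F q ^ 2 ≤ F p * F r := by
    intro p q r hp hq hr hle
    have := h _ (two_mat hp.1.le hr.1.le hle) (by
      intro i j; fin_cases i <;> fin_cases j <;> simpa)
    apply two_inv
    convert this using 1
    ext i j; fin_cases i <;> fin_cases j <;> rfl
  have hnn : ∀ x ∈ openSeg ρ, 0 ≤ F x := fun x hx => (key x x x hx hx hx (by nlinarith)).1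
  have hmono : MonotoneOn F (openSeg ρ) := by
    intro x hx y hy hxy
    have := (key y x y hy hx hy (by nlinarith [hx.1])).2.2
    exact le_of_sq_le_sq (by nlinarith) (hnn y hy)
  intro p hp
  apply ContinuousAt.continuousWithinAt
  obtain ⟨d, hd, hdm⟩ := seg_up hp
  have hp0 := hp.1
  have hI : ∀ x, 0 < x → x ≤ d → x ∈ openSeg ρ := fun x h0 h1 => seg_of_le h0 h1 hdm.2
  have hL := MonotoneOn.tendsto_nhdsWithin_Ioo_left (f := F) (x := p) (y := 0)
    (nonempty_Ioo.2 hp0) (hmono.mono fun x hx => hI x hx.1 (by linarith [hx.2]))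
    ⟨F p, by rintro _ ⟨x, hx, rfl⟩; exact hmono (hI x hx.1 (by linarith [hx.2])) hp hx.2.le⟩
  have hR := MonotoneOn.tendsto_nhdsWithin_Ioo_right (f := F) (x := p) (y := d)
    (nonempty_Ioo.2 hd) (hmono.mono fun x hx => hI x (by linarith [hx.1]) hx.2.le)
    ⟨F p, by rintro _ ⟨x, hx, rfl⟩; exact hmono hp (hI x (by linarith [hx.1]) hx.2.le) hx.1.le⟩
  set L := sSup (F '' Ioo 0 p)
  set R := sInf (F '' Ioo p d)
  have eL : ∀ᶠ x in 𝓝[<] p, x ∈ Ioo 0 p := Ioo_mem_nhdsLT hp0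
  have eR : ∀ᶠ x in 𝓝[>] p, x ∈ Ioo p d := Ioo_mem_nhdsGT hd
  have hLp : L ≤ F p := le_of_tendsto hL (eL.mono fun x hx =>
    hmono (hI x hx.1 (by linarith [hx.2])) hp hx.2.le)
  have hRp : F p ≤ R := ge_of_tendsto hR (eR.mono fun x hx =>
    hmono hp (hI x (by linarith [hx.1]) hx.2.le) hx.1.le)
  have hL0 : 0 ≤ L := ge_of_tendsto hL (eL.mono fun x hx => hnn _ (hI x hx.1 (by linarith [hx.2])))
  -- compare
  have t1 : Tendsto (fun s : ℝ => p * Real.exp (-s)) (𝓝[>] 0) (𝓝[<] p) := by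
    refine tendsto_nhdsWithin_iff.2 ⟨?_, ?_⟩
    · have : Tendsto (fun s : ℝ => p * Real.exp (-s)) (𝓝 0) (𝓝 (p * Real.exp (-0))) :=
        Continuous.tendsto (by fun_prop) 0
      rw [neg_zero, Real.exp_zero, mul_one] at this
      exact this.mono_left nhdsWithin_le_nhds
    · filter_upwards [self_mem_nhdsWithin] with s hs
      have hs' : (0:ℝ) < s := hs
      have : Real.exp (-s) < 1 := by rw [← Real.exp_zero]; exact Real.exp_lt_exp.2 (by linarith)
      simp only [mem_Iio]; nlinarith
  have t2 : ∀ k : ℝ, 0 < k → Tendsto (fun s : ℝ => p * Real.exp (k * s)) (𝓝[>] 0) (𝓝[>] p) := by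
    intro k hk
    refine tendsto_nhdsWithin_iff.2 ⟨?_, ?_⟩
    · have : Tendsto (fun s : ℝ => p * Real.exp (k * s)) (𝓝 0) (𝓝 (p * Real.exp (k * 0))) :=
        Continuous.tendsto (by fun_prop) 0
      rw [mul_zero, Real.exp_zero, mul_one] at this
      exact this.mono_left nhdsWithin_le_nhds
    · filter_upwards [self_mem_nhdsWithin] with s hs
      have hs' : (0:ℝ) < s := hs
      have : 1 < Real.exp (k * s) := Real.one_lt_exp_iff.2 (by positivity)
      simp only [mem_Ioi]; nlinarith
  have hle : R ^ 2 ≤ L * R := by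
    refine le_of_tendsto_of_tendsto ((hR.comp (t2 1 one_pos)).pow 2)
      ((hL.comp t1).mul (hR.comp (t2 3 (by norm_num)))) ?_
    filter_upwards [t1.eventually eL, (t2 1 one_pos).eventually eR,
      (t2 3 (by norm_num)).eventually eR] with s h1 h2 h3
    refine (key _ _ _ (hI _ h1.1 (by linarith [h1.2])) (hI _ (by linarith [h2.1]) h2.2.le)
      (hI _ (by linarith [h3.1]) h3.2.le) ?_).2.2
    apply le_of_eq
    have e1 : Real.exp (1 * s) ^ 2 = Real.exp (-s) * Real.exp (3 * s) := by
      rw [sq, ← Real.exp_add, ← Real.exp_add]; congr 1; ring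
    rw [mul_pow, e1]; ring
  have hRL : R ≤ L := by
    rcases (hL0.trans (hLp.trans hRp)).eq_or_lt with h0 | h0
    · rw [← h0]; exact hL0
    · nlinarith
  have eqL : L = F p := le_antisymm hLp (hRp.trans hRL)
  have eqR : R = F p := le_antisymm (hRL.trans hLp) hRp
  rw [eqL] at hL
  rw [eqR] at hR
  rw [continuousAt_iff_continuous_left'_right']
  exact ⟨hL, hR⟩
end HH

open HH in
theorem horn_hankel (ρ : ℝ≥0∞) (hρ : 0 < ρ) (u₀ : ℝ) (hu₀ : u₀ ∈ Set.Ioo (0 : ℝ) 1)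
    (N : ℕ) (hN : 3 ≤ N) (F : ℝ → ℝ)
    (hHankel : ∀ a b : ℝ, 0 ≤ a → 0 ≤ b → 0 < a + b → ENNReal.ofReal (a + b) < ρ →
      (Matrix.of fun i j : Fin N =>
        F (a + b * (u₀ ^ (i : ℕ) * u₀ ^ (j : ℕ)))).PosSemidef)
    (h2 : (∀ A : Matrix (Fin 2) (Fin 2) ℝ, A.PosSemidef → (∀ i j, A i j ∈ openSeg ρ) →
        (A.map F).PosSemidef) ∨ ContinuousOn F (openSeg ρ)) :
    ContDiffOn ℝ (N - 3 : ℕ) F (openSeg ρ) ∧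
    (∀ k ≤ N - 3, ∀ x ∈ openSeg ρ, 0 ≤ iteratedDerivWithin k F (openSeg ρ) x) ∧
    ConvexOn ℝ (openSeg ρ) (iteratedDerivWithin (N - 3) F (openSeg ρ)) ∧
    MonotoneOn (iteratedDerivWithin (N - 3) F (openSeg ρ)) (openSeg ρ) ∧
    (ContDiffOn ℝ (N - 1 : ℕ) F (openSeg ρ) →
      ∀ k ≤ N - 1, ∀ x ∈ openSeg ρ, 0 ≤ iteratedDerivWithin k F (openSeg ρ) x) := by
  have hcont : ContinuousOn F (openSeg ρ) := h2.elim cont_of_two id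
  obtain ⟨n, rfl⟩ : ∃ n, N = n + 3 := ⟨N - 3, by omega⟩
  have e3 : n + 3 - 3 = n := by omega
  have e1 : n + 3 - 1 = n + 2 := by omega
  rw [e3, e1]
  have hO := seg_open ρ
  have hseg : ∀ {c d x : ℝ}, 0 < c → d ∈ openSeg ρ → x ∈ Icc c d → x ∈ openSeg ρ :=
    fun hc hd hx => seg_of_le (hc.trans_le hx.1) hx.2 hd.2
  have hCM : ∀ c d, 0 < c → d ∈ openSeg ρ → c < d → CM n c d F := by
    intro c d hc hd hcd
    obtain ⟨d', hd1, hd2⟩ := seg_up hd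
    have hcd' : c / 2 ≤ d' := by linarith
    let G : ℝ → ℝ := IccExtend hcd' (F ∘ Subtype.val)
    have hGF : ∀ x ∈ Icc (c/2) d', G x = F x := fun x hx => by
      simp only [G, IccExtend_of_mem hcd' _ hx, Function.comp]
    have hGc : Continuous G := by
      apply Continuous.Icc_extend'
      exact (hcont.mono fun x hx => hseg (half_pos hc) hd2 hx).comp_continuous
        continuous_subtype_val fun x => x.2
    have hCG : CM n c d G := by
      refine CM_of_cont hu₀ hGc (c' := c/2) (d' := d') (by linarith) hd1 fun v a t ha ht hat => ?_
      have ha0 : 0 < a := by linarith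
      have := (hHankel a t ha0.le ht (by linarith) (seg_of_le (by linarith) hat hd2.2).2).dotProduct_mulVec_nonneg v
      have e : ∑ i, ∑ j, v i * v j * G (a + t * (u₀ ^ (i : ℕ) * u₀ ^ (j : ℕ))) =
          ∑ i, ∑ j, v i * v j * F (a + t * (u₀ ^ (i : ℕ) * u₀ ^ (j : ℕ))) := by
        refine Finset.sum_congr rfl fun i _ => Finset.sum_congr rfl fun j _ => ?_
        have hi : u₀ ^ (i : ℕ) * u₀ ^ (j : ℕ) ≤ 1 := by
          rw [← pow_add]; exact pow_le_one₀ hu₀.1.le hu₀.2.le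
        have hi0 : 0 ≤ u₀ ^ (i : ℕ) * u₀ ^ (j : ℕ) := by
          have := hu₀.1; positivity
        rw [hGF _ ⟨by nlinarith, by nlinarith⟩]
      rw [e]
      refine this.trans_eq ?_
      simp only [dotProduct, Matrix.mulVec, Matrix.of_apply, Finset.mul_sum, star_trivial]
      refine Finset.sum_congr rfl fun i _ => Finset.sum_congr rfl fun j _ => ?_
      ring
    refine CM.lim (l := (pure () : Filter Unit)) (g := fun _ => G) (by simpa using hCG) fun x hx => ?_
    rw [hGF x ⟨by linarith [hx.1], by linarith [hx.2]⟩]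
    exact tendsto_const_nhds
  have hW : ∀ k, ∀ x ∈ openSeg ρ, iteratedDerivWithin k F (openSeg ρ) x = iteratedDeriv k F x :=
    fun k x hx => iteratedDerivWithin_of_isOpen hO hx
  -- two points lie in a common interval
  have hpair : ∀ x ∈ openSeg ρ, ∀ y ∈ openSeg ρ, ∃ c d, 0 < c ∧ d ∈ openSeg ρ ∧ c < d ∧
      x ∈ Ioo c d ∧ y ∈ Ioo c d := by
    intro x hx y hy
    have hm : max x y ∈ openSeg ρ := by rcases max_choice x y with h | h <;> rwa [h]
    obtain ⟨d, hd, hdm⟩ := seg_up hm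
    have h1 := le_max_left x y
    have h2 := le_max_right x y
    have hx0 := hx.1
    have hy0 := hy.1
    have h3 : 0 < min x y := lt_min hx0 hy0
    have h4 := min_le_left x y
    have h5 := min_le_right x y
    exact ⟨min x y / 2, d, by linarith, hdm, by linarith, ⟨by linarith, by linarith⟩,
      ⟨by linarith, by linarith⟩⟩
  have hconvS : Convex ℝ (openSeg ρ) := by
    apply OrdConnected.convex
    exact ⟨fun x hx y hy z hz => hseg hx.1 hy hz⟩
  have hconv : ConvexOn ℝ (openSeg ρ) (iteratedDerivWithin n F (openSeg ρ)) := by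
    refine ⟨hconvS, fun x hx y hy a b ha hb hab => ?_⟩
    obtain ⟨c, d, hc, hd, hcd, hxm, hym⟩ := hpair x hx y hy
    rw [hW _ _ (hconvS hx hy ha hb hab), hW _ _ hx, hW _ _ hy]
    exact (hCM c d hc hd hcd).regular.2.2.2.2.2 hxm hym ha hb hab
  have hmono : MonotoneOn (iteratedDerivWithin n F (openSeg ρ)) (openSeg ρ) := by
    intro x hx y hy hxy
    obtain ⟨c, d, hc, hd, hcd, hxm, hym⟩ := hpair x hx y hy
    rw [hW _ _ hx, hW _ _ hy]
    exact (hCM c d hc hd hcd).regular.2.2.2.1 hxm hym hxy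
  have hnn : ∀ k ≤ n, ∀ x ∈ openSeg ρ, 0 ≤ iteratedDerivWithin k F (openSeg ρ) x := by
    intro k hk x hx
    obtain ⟨c, d, hc, hd, hcd, hxm, -⟩ := hpair x hx x hx
    rw [hW _ _ hx]
    exact (hCM c d hc hd hcd).regular.2.1 k hk x hxm
  refine ⟨?_, hnn, hconv, hmono, ?_⟩
  · intro x hx
    obtain ⟨c, d, hc, hd, hcd, hxm, -⟩ := hpair x hx x hx
    exact ((hCM c d hc hd hcd).regular.1.contDiffAt (Ioo_mem_nhds hxm.1 hxm.2)).contDiffWithinAt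
  · intro hsm k hk x hx
    set S := openSeg ρ
    have hU : UniqueDiffOn ℝ S := hO.uniqueDiffOn
    have hdn : DifferentiableOn ℝ (iteratedDerivWithin n F S) S :=
      hsm.differentiableOn_iteratedDerivWithin (by exact_mod_cast (by omega : n < n + 2)) hU
    have hs1 : iteratedDerivWithin (n+1) F S = derivWithin (iteratedDerivWithin n F S) S := iteratedDerivWithin_succ
    rcases Nat.lt_or_ge n k with hk' | hk'
    · obtain rfl | rfl : k = n + 1 ∨ k = n + 2 := by omega
      · rw [hs1]; exact hmono.derivWithin_nonneg
      · rw [iteratedDerivWithin_succ]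
        apply MonotoneOn.derivWithin_nonneg
        intro a ha b hb hab
        have := hconv.monotoneOn_derivWithin hdn ha hb hab
        rwa [hs1]
    · exact hnn k hk' x hx
end

section
/- Let 2 ≤ k ≤ N be integers and let α ∈ ℝ. The power function x ↦ x^α preserves positive semidefiniteness when applied entrywise to N×N positive semidefinite Hankel matrices of rank at most k with entries in (0,∞) if and only if α is a non-negative integer or α ≥ N−2. Moreover, there exists an N×N positive semidefinite Hankel matrix A of rank two with entries in (0,∞) such that the entrywise power A^{∘α} is not positive semidefinite for every non-integral α ∈ (0, N−2). -/
/-- A Hankel matrix: the `(i,j)` entry depends only on `i + j`. -/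
def IsHankelMat {n : ℕ} (A : Matrix (Fin n) (Fin n) ℝ) : Prop :=
  ∀ i j k l : Fin n, (i : ℕ) + (j : ℕ) = (k : ℕ) + (l : ℕ) → A i j = A k l

open Finset in
lemma hp_psd_iff {n : ℕ} (A : Matrix (Fin n) (Fin n) ℝ) :
    A.PosSemidef ↔ (∀ i j, A i j = A j i) ∧
      ∀ x : Fin n → ℝ, 0 ≤ ∑ i, ∑ j, x i * x j * A i j := by
  rw [Matrix.posSemidef_iff_dotProduct_mulVec]
  have h1 : A.IsHermitian ↔ (∀ i j, A i j = A j i) := by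
    constructor
    · intro h i j
      have := h.apply j i
      simpa using this
    · intro h
      ext i j
      simp [h i j]
  have h2 : ∀ x : Fin n → ℝ, star x ⬝ᵥ A.mulVec x = ∑ i, ∑ j, x i * x j * A i j := by
    intro x
    simp only [dotProduct, Matrix.mulVec, Finset.mul_sum]
    refine Finset.sum_congr rfl fun i _ => Finset.sum_congr rfl fun j _ => ?_
    simp; ring
  rw [h1]
  simp only [h2]

lemma hp_schur {n : ℕ} (A : Matrix (Fin (n+1)) (Fin (n+1)) ℝ) (hA : A.PosSemidef)
    (h0 : 0 < A 0 0) (x : Fin (n+1) → ℝ) :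
    0 ≤ ∑ i, ∑ j, x i * x j * (A i j - A 0 i * A 0 j / A 0 0) := by
  obtain ⟨hs, hq⟩ := (hp_psd_iff A).1 hA
  set L : ℝ := ∑ i, x i * A 0 i with hL
  have key : ∀ t : ℝ, ∑ i, ∑ j, (x i + if i = 0 then t else 0) * (x j + if j = 0 then t else 0) * A i j
      = ∑ i, ∑ j, x i * x j * A i j + 2 * t * L + t ^ 2 * A 0 0 := by
    intro t
    have : ∀ i j : Fin (n+1), (x i + if i = 0 then t else 0) * (x j + if j = 0 then t else 0) * A i j
      = x i * x j * A i j + (if i = 0 then t * (x j * A 0 j) else 0)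
        + (if j = 0 then t * (x i * A 0 i) else 0)
        + (if i = 0 then (if j = 0 then t ^ 2 * A 0 0 else 0) else 0) := by
      intro i j
      by_cases hi : i = 0 <;> by_cases hj : j = 0
      · subst hi hj; simp; ring
      · subst hi; simp [hj]; ring
      · subst hj; simp [hi, hs i 0]; ring
      · simp [hi, hj]
    simp only [this, Finset.sum_add_distrib, Finset.sum_ite_irrel, Finset.sum_ite_eq',
      Finset.sum_const_zero, Finset.mem_univ, if_true, ← Finset.mul_sum, ← hL]
    ring
  have h := hq (fun i => x i + if i = 0 then (-L / A 0 0) else 0)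
  simp only [key] at h
  have e : ∑ i, ∑ j, x i * x j * (A i j - A 0 i * A 0 j / A 0 0)
      = ∑ i, ∑ j, x i * x j * A i j - L ^ 2 / A 0 0 := by
    have : L ^ 2 / A 0 0 = ∑ i, ∑ j, x i * x j * (A 0 i * A 0 j / A 0 0) := by
      rw [sq, hL, Finset.sum_mul_sum, Finset.sum_div]
      refine Finset.sum_congr rfl fun i _ => ?_
      rw [Finset.sum_div]
      refine Finset.sum_congr rfl fun j _ => ?_
      ring
    rw [this]
    simp only [mul_sub, Finset.sum_sub_distrib]
  rw [e]
  have : 2 * (-L / A 0 0) * L + (-L / A 0 0) ^ 2 * A 0 0 = - (L ^ 2 / A 0 0) := by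
    field_simp; ring
  linarith

lemma hp_fh (n : ℕ) : ∀ (α : ℝ), (n : ℝ) - 1 ≤ α → ∀ A : Matrix (Fin (n+1)) (Fin (n+1)) ℝ,
    A.PosSemidef → (∀ i j, 0 < A i j) → (A.map fun x => x ^ α).PosSemidef := by
  induction n with
  | zero =>
    intro α _ A _ hp
    rw [hp_psd_iff]
    refine ⟨fun i j => by rw [show i = j from Fin.ext (by omega)], fun x => ?_⟩
    simp
    exact mul_nonneg (mul_self_nonneg _) (Real.rpow_nonneg (hp _ _).le _)
  | succ n ih =>
    intro α hα A hA hp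
    push_cast at hα
    obtain ⟨hs, hq⟩ := (hp_psd_iff A).1 hA
    have hα0 : 0 ≤ α := by
      have : (0:ℝ) ≤ n := Nat.cast_nonneg n
      linarith
    rw [hp_psd_iff]
    refine ⟨fun i j => by simp [hs i j], fun x => ?_⟩
    simp only [Matrix.map_apply]
    set B : Fin (n+2) → Fin (n+2) → ℝ := fun i j => A 0 i * A 0 j / A 0 0 with hB
    have hBp : ∀ i j, 0 < B i j := fun i j => div_pos (mul_pos (hp _ _) (hp _ _)) (hp _ _)
    have hMp : ∀ t ∈ Set.Icc (0:ℝ) 1, ∀ i j, 0 < B i j + t * (A i j - B i j) := by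
      intro t ht i j
      have : B i j + t * (A i j - B i j) = (1 - t) * B i j + t * A i j := by ring
      rw [this]
      rcases eq_or_lt_of_le ht.1 with h | h
      · rw [← h]; simpa using hBp i j
      · exact add_pos_of_nonneg_of_pos (mul_nonneg (by linarith [ht.2]) (hBp i j).le)
          (mul_pos h (hp i j))
    set φ : ℝ → ℝ := fun t => ∑ i, ∑ j, x i * x j * (B i j + t * (A i j - B i j)) ^ α with hφ
    have hd : ∀ t ∈ Set.Icc (0:ℝ) 1, HasDerivAt φ
        (∑ i, ∑ j, x i * x j * ((A i j - B i j) * α * (B i j + t * (A i j - B i j)) ^ (α - 1))) t := by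
      intro t ht
      refine HasDerivAt.fun_sum fun i _ => HasDerivAt.fun_sum fun j _ => HasDerivAt.const_mul _ ?_
      refine HasDerivAt.rpow_const ?_ (Or.inl (hMp t ht i j).ne')
      simpa using ((hasDerivAt_id t).mul_const (A i j - B i j)).const_add (B i j)
    have hC0 : ∀ j, A 0 j - B 0 j = 0 := by
      intro j; simp only [hB]; field_simp [(hp 0 0).ne']; ring
    have hC0' : ∀ i, A i 0 - B i 0 = 0 := by
      intro j; simp only [hB]; rw [hs j 0]; field_simp [(hp 0 0).ne']; ring
    have hCpsd : (Matrix.of fun i j => A i j - B i j).PosSemidef := by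
      rw [hp_psd_iff]
      refine ⟨fun i j => by simp [hB, hs i j, mul_comm], fun y => ?_⟩
      exact hp_schur A hA (hp 0 0) y
    have hBq : ∀ y : Fin (n+2) → ℝ, 0 ≤ ∑ i, ∑ j, y i * y j * B i j := by
      intro y
      have : ∑ i, ∑ j, y i * y j * B i j = (∑ i, y i * A 0 i) ^ 2 / A 0 0 := by
        rw [sq, Finset.sum_mul_sum, Finset.sum_div]
        refine Finset.sum_congr rfl fun i _ => ?_
        rw [Finset.sum_div]
        refine Finset.sum_congr rfl fun j _ => ?_
        simp only [hB]; ring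
      rw [this]
      exact div_nonneg (sq_nonneg _) (hp 0 0).le
    have hBpsd : (Matrix.of B).PosSemidef := by
      rw [hp_psd_iff]
      exact ⟨fun i j => by simp [hB, mul_comm], hBq⟩
    have hdn : ∀ t ∈ Set.Icc (0:ℝ) 1, 0 ≤
        (∑ i, ∑ j, x i * x j * ((A i j - B i j) * α * (B i j + t * (A i j - B i j)) ^ (α - 1))) := by
      intro t ht
      have hM : ((Matrix.of B) + t • (Matrix.of fun i j => A i j - B i j)).PosSemidef :=
        hBpsd.add (hCpsd.smul ht.1)
      have h1 := ih (α - 1) (by linarith) _ (hM.submatrix Fin.succ) (by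
        intro i j
        simpa using hMp t ht i.succ j.succ)
      have h2 := (hCpsd.submatrix Fin.succ).hadamard h1
      have h3 := ((hp_psd_iff _).1 h2).2 (fun i => x i.succ)
      have : (∑ i, ∑ j, x i * x j * ((A i j - B i j) * α * (B i j + t * (A i j - B i j)) ^ (α - 1)))
        = α * ∑ i : Fin (n+1), ∑ j : Fin (n+1), x i.succ * x j.succ * ((A i.succ j.succ - B i.succ j.succ) * (B i.succ j.succ + t * (A i.succ j.succ - B i.succ j.succ)) ^ (α - 1)) := by
        simp only [Fin.sum_univ_succ (n := n+1), hC0, hC0', zero_mul, mul_zero, Finset.sum_const_zero, zero_add, Finset.mul_sum]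
        refine Finset.sum_congr rfl fun i _ => Finset.sum_congr rfl fun j _ => ?_
        ring
      rw [this]
      refine mul_nonneg hα0 ?_
      simpa using h3
    have hmono : MonotoneOn φ (Set.Icc 0 1) := by
      refine monotoneOn_of_deriv_nonneg (convex_Icc 0 1)
        (fun t ht => (hd t ht).continuousAt.continuousWithinAt) ?_ ?_
      · intro t ht
        exact (hd t (interior_subset ht)).differentiableAt.differentiableWithinAt
      · intro t ht
        rw [(hd t (interior_subset ht)).deriv]
        exact hdn t (interior_subset ht)
    have h01 := hmono (Set.left_mem_Icc.2 zero_le_one) (Set.right_mem_Icc.2 zero_le_one) zero_le_one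
    have h1 : φ 1 = ∑ i, ∑ j, x i * x j * (A i j) ^ α := by simp [hφ]
    have h0 : φ 0 = (∑ i, x i * (A 0 i) ^ α) ^ 2 / (A 0 0) ^ α := by
      rw [sq, Finset.sum_mul_sum, Finset.sum_div]
      refine Finset.sum_congr rfl fun i _ => ?_
      rw [Finset.sum_div]
      refine Finset.sum_congr rfl fun j _ => ?_
      simp only [hB, zero_mul, add_zero]
      rw [Real.div_rpow (mul_pos (hp _ _) (hp _ _)).le (hp _ _).le, Real.mul_rpow (hp _ _).le (hp _ _).le]
      ring
    rw [← h1]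
    refine le_trans ?_ h01
    rw [h0]
    exact div_nonneg (sq_nonneg _) (Real.rpow_nonneg (hp _ _).le _)

lemma hp_nat {N : ℕ} (n : ℕ) (A : Matrix (Fin N) (Fin N) ℝ) (hA : A.PosSemidef) :
    (A.map fun x => x ^ (n : ℝ)).PosSemidef := by
  simp only [Real.rpow_natCast]
  induction n with
  | zero =>
    rw [hp_psd_iff]
    refine ⟨by simp, fun x => ?_⟩
    simp only [Matrix.map_apply, pow_zero, mul_one, ← Finset.sum_mul_sum]
    exact mul_self_nonneg _
  | succ n ih =>
    have := ih.hadamard hA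
    have e : (A.map fun x => x ^ (n + 1)) = (A.map fun x => x ^ n).hadamard A := by
      ext i j
      simp [pow_succ]
    rw [e]
    exact this

lemma hp_binom (β x : ℝ) (hx : |x| < 1) :
    HasSum (fun r => Ring.choose β r * x ^ r) ((1 + x) ^ β) := by
  have h := (Real.one_add_rpow_hasFPowerSeriesOnBall_zero (a := β)).hasSum (y := x) (by
    simpa [Metric.mem_eball, edist_dist, dist_eq_norm] using hx)
  rw [zero_add] at h
  have e : (fun r => Ring.choose β r * x ^ r) =
      fun n => (binomialSeries ℝ β n) fun _ => x := by
    funext r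
    rw [binomialSeries_apply]
    simp
  rw [e]
  exact h

lemma hp_choose (β : ℝ) (r : ℕ) :
    Ring.choose β (r+1) = Ring.choose β r * ((β - r) / (r + 1)) := by
  have h1 := Ring.descPochhammer_eq_factorial_smul_choose β r
  have h2 := Ring.descPochhammer_eq_factorial_smul_choose β (r+1)
  rw [descPochhammer_succ_right, Polynomial.smeval_mul, h1] at h2
  simp [Polynomial.smeval_sub, Polynomial.smeval_X, Polynomial.smeval_natCast, Nat.factorial_succ] at h2
  have hr : (r.factorial : ℝ) ≠ 0 := by positivity
  have h3 : Ring.choose β r * (β - r) = (r+1) * Ring.choose β (r+1) := by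
    apply mul_left_cancel₀ hr
    linear_combination h2
  field_simp
  linarith

lemma hp_choose_pos (β : ℝ) (n : ℕ) (h : (n:ℝ) < β) : ∀ r ≤ n + 1, 0 < Ring.choose β r := by
  intro r
  induction r with
  | zero => intro _; simp
  | succ r ih =>
    intro hr
    rw [hp_choose]
    have : (r:ℝ) ≤ n := by exact_mod_cast (by omega : r ≤ n)
    exact mul_pos (ih (by omega)) (div_pos (by linarith) (by positivity))

lemma hp_choose_neg (β : ℝ) (n : ℕ) (h : (n:ℝ) < β) (h' : β < n + 1) :
    Ring.choose β (n+2) < 0 := by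
  rw [hp_choose]
  refine mul_neg_of_pos_of_neg (hp_choose_pos β n h _ le_rfl) ?_
  refine div_neg_of_neg_of_pos ?_ (by positivity)
  push_cast; linarith

lemma hp_choose_abs (β : ℝ) (n : ℕ) (h : (n:ℝ) < β) (h' : β < n + 1) (k : ℕ) :
    |Ring.choose β (k+(n+2))| ≤ |Ring.choose β (n+2)| := by
  induction k with
  | zero => simp
  | succ k ih =>
    rw [show k + 1 + (n+2) = (k + (n+2)) + 1 by ring, hp_choose, abs_mul]
    refine le_trans (mul_le_of_le_one_right (abs_nonneg _) ?_) ih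
    have hn : (0:ℝ) ≤ n := Nat.cast_nonneg n
    have hk : (0:ℝ) ≤ k := Nat.cast_nonneg k
    rw [abs_div, div_le_one (by positivity), abs_of_pos (by positivity : (0:ℝ) < ((k + (n+2) : ℕ):ℝ) + 1), abs_le]
    push_cast
    constructor <;> linarith

noncomputable def hpA (N : ℕ) : Matrix (Fin N) (Fin N) ℝ :=
  Matrix.of fun i j => 1 + (1/2:ℝ) ^ (2 * N ^ 2 + 2) * (1/2:ℝ) ^ ((i:ℕ) + j)

lemma hp_fail (N n : ℕ) (hN : n + 3 ≤ N) (β : ℝ) (h : (n:ℝ) < β) (h' : β < n + 1) :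
    ¬ ((hpA N).map fun x => x ^ β).PosSemidef := by
  intro hpsd
  set s : ℝ := (1/2:ℝ) ^ (2 * N ^ 2 + 2) with hs
  have hs0 : 0 < s := by positivity
  have hs1 : s ≤ 1/4 := by
    rw [hs, pow_add]
    have : (1/2:ℝ) ^ (2 * N ^ 2) ≤ 1 := pow_le_one₀ (by norm_num) (by norm_num)
    nlinarith
  set P : Polynomial ℝ := ∏ j ∈ Finset.range (n+2), (Polynomial.X - Polynomial.C ((1/2:ℝ)^j)) with hP
  have hdeg : P.natDegree < N := by
    rw [hP, Polynomial.natDegree_prod_of_monic _ _ (fun j _ => Polynomial.monic_X_sub_C _)]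
    simp; omega
  have heval : ∀ y : ℝ, P.eval y = ∑ i : Fin N, P.coeff i * y ^ (i:ℕ) := by
    intro y
    rw [Polynomial.eval_eq_sum_range' hdeg, Finset.sum_range]
  have hev2 : ∀ y : ℝ, P.eval y = ∏ j ∈ Finset.range (n+2), (y - (1/2:ℝ)^j) := by
    intro y; simp [hP, Polynomial.eval_prod]
  have hq := ((hp_psd_iff _).1 hpsd).2 (fun i => P.coeff i)
  have hsum : HasSum (fun r => Ring.choose β r * s ^ r * (P.eval ((1/2:ℝ)^r)) ^ 2)
      (∑ i : Fin N, ∑ j : Fin N, P.coeff i * P.coeff j * ((hpA N).map fun x => x ^ β) i j) := by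
    have h1 : HasSum (fun r => ∑ i : Fin N, ∑ j : Fin N, P.coeff i * P.coeff j *
        (Ring.choose β r * (s * (1/2:ℝ) ^ ((i:ℕ) + j)) ^ r))
      (∑ i : Fin N, ∑ j : Fin N, P.coeff i * P.coeff j * ((hpA N).map fun x => x ^ β) i j) := by
      refine hasSum_sum fun i _ => hasSum_sum fun j _ => HasSum.mul_left _ ?_
      refine hp_binom β _ ?_
      rw [abs_of_pos (by positivity)]
      have : (1/2:ℝ) ^ ((i:ℕ) + j) ≤ 1 := pow_le_one₀ (by norm_num) (by norm_num)
      nlinarith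
    convert h1 using 2 with r
    rw [sq, heval, Finset.sum_mul_sum, Finset.mul_sum]
    refine Finset.sum_congr rfl fun i _ => ?_
    rw [Finset.mul_sum]
    refine Finset.sum_congr rfl fun j _ => ?_
    rw [mul_pow, ← pow_mul, ← pow_mul, ← pow_mul, mul_comm r, mul_comm r, add_mul, pow_add]
    ring
  set q := (∑ i : Fin N, ∑ j : Fin N, P.coeff i * P.coeff j * ((hpA N).map fun x => x ^ β) i j)
  have hsum2 := (hasSum_nat_add_iff' (n+2)).2 hsum
  rw [Finset.sum_eq_zero (s := Finset.range (n+2)) (by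
    intro r hr
    rw [hev2, Finset.prod_eq_zero hr (by simp)]
    simp), sub_zero] at hsum2
  set K := |Ring.choose β (n+2)| with hK
  have hneg := hp_choose_neg β n h h'
  have hK0 : 0 < K := abs_pos.2 hneg.ne
  set w := (P.eval ((1/2:ℝ)^(n+2))) ^ 2 with hw
  have hw1 : (1/2:ℝ) ^ (2 * N ^ 2) ≤ w := by
    have h1 : ((1/2:ℝ)^(n+2))^(n+2) ≤ |P.eval ((1/2:ℝ)^(n+2))| := by
      rw [hev2, Finset.abs_prod]
      calc ((1/2:ℝ)^(n+2))^(n+2) = ∏ j ∈ Finset.range (n+2), (1/2:ℝ)^(n+2) := by simp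
        _ ≤ _ := by
          refine Finset.prod_le_prod (fun _ _ => by positivity) fun j hj => ?_
          have hj' : j ≤ n + 1 := by have := Finset.mem_range.1 hj; omega
          have : (1/2:ℝ)^(n+1) ≤ (1/2)^j := pow_le_pow_of_le_one (by norm_num) (by norm_num) hj'
          rw [abs_sub_comm]
          refine le_trans ?_ (le_abs_self _)
          rw [pow_succ _ (n+1)]
          linarith
    have h2 : (((1/2:ℝ)^(n+2))^(n+2))^2 ≤ w := by
      rw [hw, ← sq_abs (P.eval _)]
      exact pow_le_pow_left₀ (by positivity) h1 2
    refine le_trans ?_ h2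
    rw [← pow_mul, ← pow_mul]
    refine pow_le_pow_of_le_one (by norm_num) (by norm_num) ?_
    have : n + 2 ≤ N := by omega
    nlinarith
  have hP1 : ∀ r, (P.eval ((1/2:ℝ)^r)) ^ 2 ≤ 1 := by
    intro r
    rw [sq_le_one_iff_abs_le_one, hev2, Finset.abs_prod]
    refine Finset.prod_le_one (fun _ _ => abs_nonneg _) fun j _ => ?_
    have a1 : (1/2:ℝ) ^ r ≤ 1 := pow_le_one₀ (by norm_num) (by norm_num)
    have a2 : (1/2:ℝ) ^ j ≤ 1 := pow_le_one₀ (by norm_num) (by norm_num)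
    have a3 : 0 < (1/2:ℝ) ^ r := by positivity
    have a4 : 0 < (1/2:ℝ) ^ j := by positivity
    rw [abs_le]; constructor <;> linarith
  have hg : HasSum (fun k : ℕ => K * s ^ (n+2) * (s ^ k - if k = 0 then (1 + w) else 0))
      (K * s ^ (n+2) * ((1 - s)⁻¹ - (1 + w))) := by
    refine HasSum.mul_left _ (HasSum.sub (hasSum_geometric_of_lt_one hs0.le (by linarith)) ?_)
    exact hasSum_ite_eq 0 (1 + w)
  have hle := hasSum_le (fun k => by
    show _ ≤ K * s ^ (n+2) * (s ^ k - if k = 0 then (1 + w) else 0)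
    rcases Nat.eq_zero_or_pos k with rfl | hk
    · simp only [zero_add, pow_zero, if_true]
      rw [hK, abs_of_neg hneg]
      apply le_of_eq
      ring
    · rw [if_neg hk.ne', sub_zero, mul_assoc K, ← pow_add, add_comm (n+2) k]
      calc _ ≤ |Ring.choose β (k + (n+2))| * s ^ (k + (n+2)) * 1 := by
            gcongr
            · exact le_abs_self _
            · exact hP1 _
        _ ≤ _ := by
          rw [mul_one]
          gcongr
          exact hp_choose_abs β n h h' k) hsum2 hg
  have hfin : (1 - s)⁻¹ - (1 + w) < 0 := by
    have e1 : (1/2:ℝ) ^ (2 * N ^ 2) = 4 * s := by rw [hs, pow_add]; ring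
    have : (1 - s)⁻¹ < 1 + w := by
      rw [inv_lt_iff_one_lt_mul₀ (by linarith)]
      nlinarith
    linarith
  have : K * s ^ (n+2) * ((1 - s)⁻¹ - (1 + w)) < 0 := mul_neg_of_pos_of_neg (by positivity) hfin
  linarith

lemma hp_A_pos (N : ℕ) (i j) : 0 < hpA N i j := by
  simp only [hpA, Matrix.of_apply]; positivity

lemma hp_A_hankel (N : ℕ) : IsHankelMat (hpA N) := by
  intro i j k l h
  simp [hpA, h]

lemma hp_A_fac (N : ℕ) : ∃ B : Matrix (Fin N) (Fin 2) ℝ, hpA N = B * B.transpose ∧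
    (2 ≤ N → B.rank = 2) := by
  set d := Real.sqrt ((1/2:ℝ) ^ (2 * N ^ 2 + 2)) with hd
  have hd2 : d * d = (1/2:ℝ) ^ (2 * N ^ 2 + 2) := Real.mul_self_sqrt (by positivity)
  have hd0 : 0 < d := Real.sqrt_pos.2 (by positivity)
  refine ⟨Matrix.of fun i c => if c = 0 then 1 else d * (1/2:ℝ)^(i:ℕ), ?_, ?_⟩
  · ext i j
    simp only [hpA, Matrix.of_apply, Matrix.mul_apply, Fin.sum_univ_two, Matrix.transpose_apply]
    simp only [if_true, one_ne_zero, if_false]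
    rw [← hd2, pow_add]; ring
  · intro hN
    refine le_antisymm (le_trans (Matrix.rank_le_card_width _) (by simp)) ?_
    set B : Matrix (Fin N) (Fin 2) ℝ := Matrix.of fun i c => if c = 0 then 1 else d * (1/2:ℝ)^(i:ℕ)
    have h1 := Matrix.rank_submatrix_le B (Fin.castLE hN) (id : Fin 2 → Fin 2)
    refine le_trans (le_of_eq ?_) h1
    rw [Matrix.rank_of_isUnit]
    · simp
    · rw [Matrix.isUnit_iff_isUnit_det, Matrix.det_fin_two, isUnit_iff_ne_zero]
      simp [B]
      intro hh
      linarith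

lemma hp_A_psd (N : ℕ) : (hpA N).PosSemidef := by
  obtain ⟨B, hB, _⟩ := hp_A_fac N
  rw [hB]
  simpa using Matrix.posSemidef_self_mul_conjTranspose B

lemma hp_A_rank (N : ℕ) (hN : 2 ≤ N) : (hpA N).rank = 2 := by
  obtain ⟨B, hB, h⟩ := hp_A_fac N
  rw [hB, Matrix.rank_self_mul_transpose, h hN]

lemma hp_neg (N : ℕ) (hN : 2 ≤ N) (α : ℝ) (hα : α < 0) :
    ¬ ((hpA N).map fun x => x ^ α).PosSemidef := by
  intro h
  have h2 := (h.submatrix (Fin.castLE hN)).det_nonneg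
  rw [Matrix.det_fin_two] at h2
  simp only [Matrix.submatrix_apply, Matrix.map_apply] at h2
  set s : ℝ := (1/2:ℝ) ^ (2 * N ^ 2 + 2) with hs
  have hs0 : 0 < s := by positivity
  have e00 : hpA N (Fin.castLE hN 0) (Fin.castLE hN 0) = 1 + s := by simp [hpA, hs]
  have e01 : hpA N (Fin.castLE hN 0) (Fin.castLE hN 1) = 1 + s / 2 := by simp [hpA, hs]; ring
  have e10 : hpA N (Fin.castLE hN 1) (Fin.castLE hN 0) = 1 + s / 2 := by simp [hpA, hs]; ring
  have e11 : hpA N (Fin.castLE hN 1) (Fin.castLE hN 1) = 1 + s / 4 := by simp [hpA, hs]; ring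
  rw [e00, e01, e10, e11, ← Real.mul_rpow (by positivity) (by positivity),
    ← Real.mul_rpow (by positivity) (by positivity)] at h2
  have := Real.rpow_lt_rpow_of_neg (x := (1 + s/2) * (1 + s/2)) (y := (1 + s) * (1 + s/4)) (by positivity)
    (by nlinarith) hα
  linarith

theorem hankel_power_preserver (N k : ℕ) (hk : 2 ≤ k) (hkN : k ≤ N) (α : ℝ) :
    ((∀ A : Matrix (Fin N) (Fin N) ℝ, IsHankelMat A → A.PosSemidef → A.rank ≤ k →
        (∀ i j, 0 < A i j) → (A.map fun x => x ^ α).PosSemidef) ↔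
      ((∃ n : ℕ, α = n) ∨ (N : ℝ) - 2 ≤ α)) ∧
    ∃ A : Matrix (Fin N) (Fin N) ℝ, IsHankelMat A ∧ A.PosSemidef ∧ A.rank = 2 ∧
      (∀ i j, 0 < A i j) ∧
      ∀ β : ℝ, (¬∃ n : ℕ, β = n) → β ∈ Set.Ioo (0 : ℝ) ((N : ℝ) - 2) →
        ¬(A.map fun x => x ^ β).PosSemidef := by
  have hN : 2 ≤ N := hk.trans hkN
  have hmain : ∀ β : ℝ, (¬∃ n : ℕ, β = n) → β ∈ Set.Ioo (0 : ℝ) ((N : ℝ) - 2) →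
        ¬((hpA N).map fun x => x ^ β).PosSemidef := by
    intro β hβ ⟨h0, h1⟩
    have hfl : ((⌊β⌋₊ : ℕ) : ℝ) ≤ β := Nat.floor_le h0.le
    have hlt : ((⌊β⌋₊ : ℕ) : ℝ) < β := lt_of_le_of_ne hfl fun e => hβ ⟨_, e.symm⟩
    refine hp_fail N ⌊β⌋₊ ?_ β hlt (Nat.lt_floor_add_one β)
    have : ((⌊β⌋₊ + 2 : ℕ) : ℝ) < N := by push_cast; linarith
    have := Nat.cast_lt.1 this
    omega
  refine ⟨⟨fun H => ?_, ?_⟩, hpA N, hp_A_hankel N, hp_A_psd N, hp_A_rank N hN, hp_A_pos N, hmain⟩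
  · by_contra hcon
    push Not at hcon
    obtain ⟨h1, h2⟩ := hcon
    have hA := H (hpA N) (hp_A_hankel N) (hp_A_psd N) ((hp_A_rank N hN).le.trans hk) (hp_A_pos N)
    rcases lt_trichotomy α 0 with h | h | h
    · exact hp_neg N hN α h hA
    · exact h1 0 (by simpa using h)
    · exact hmain α (fun ⟨n, hn⟩ => h1 n hn) ⟨h, h2⟩ hA
  · rintro (⟨n, rfl⟩ | h) A _ hA _ hp
    · exact hp_nat n A hA
    · obtain ⟨M, rfl⟩ : ∃ M, N = M + 1 := ⟨N - 1, by omega⟩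
      refine hp_fh M α ?_ A hA hp
      push_cast at h
      linarith
end

section
/- For a function F : [0,∞) → ℝ, the following are equivalent: (1) for every totally non-negative rectangular real matrix of any size, applying F entrywise yields a totally non-negative matrix; (2) for every totally non-negative real symmetric matrix of any size, applying F entrywise yields a totally non-negative matrix; (3) F is constant or linear: there exists c ≥ 0 such that either F(x) = c for all x ≥ 0, or F(x) = c·x for all x ≥ 0. -/
/-- A totally non-negative matrix: every minor is non-negative. -/
def TotallyNonneg {m n : ℕ} (A : Matrix (Fin m) (Fin n) ℝ) : Prop :=
  ∀ (k : ℕ) (r : Fin k → Fin m) (c : Fin k → Fin n),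
    StrictMono r → StrictMono c → 0 ≤ (A.submatrix r c).det

lemma gram_tn {n : ℕ} (a b c : Fin n → ℝ) (x : ℝ) (hx : 0 ≤ x)
    (ha : ∀ i, 0 ≤ a i) (hb : ∀ i, 0 ≤ b i) (hc : ∀ i, 0 ≤ c i)
    (hab : ∀ i j, i < j → 0 ≤ a i * b j - a j * b i)
    (hac : ∀ i j, i < j → 0 ≤ a i * c j - a j * c i)
    (hbc : ∀ i j, i < j → 0 ≤ b i * c j - b j * c i)
    (habc : ∀ i j k, i < j → j < k → 0 ≤ a i * (b j * c k - b k * c j)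
      - b i * (a j * c k - a k * c j) + c i * (a j * b k - a k * b j)) :
    TotallyNonneg (Matrix.of fun i j => a i * a j + x * (b i * b j + c i * c j)) := by
  intro k r s hr hs
  match k, r, s, hr, hs with
  | 0, r, s, hr, hs => simp
  | 1, r, s, hr, hs =>
    simp only [Matrix.det_unique, Matrix.submatrix_apply, Matrix.of_apply]
    have := ha (r default); have := ha (s default)
    have := hb (r default); have := hb (s default)
    have := hc (r default); have := hc (s default)
    positivity
  | 2, r, s, hr, hs =>
    simp only [Matrix.det_fin_two, Matrix.submatrix_apply, Matrix.of_apply]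
    have h1 : r 0 < r 1 := hr (by decide)
    have h2 : s 0 < s 1 := hs (by decide)
    have e1 := mul_nonneg (hab _ _ h1) (hab _ _ h2)
    have e2 := mul_nonneg (hac _ _ h1) (hac _ _ h2)
    have e3 := mul_nonneg (hbc _ _ h1) (hbc _ _ h2)
    have := add_nonneg (add_nonneg (mul_nonneg hx e1) (mul_nonneg hx e2))
      (mul_nonneg (mul_nonneg hx hx) e3)
    refine this.trans_eq ?_
    ring
  | 3, r, s, hr, hs =>
    simp only [Matrix.det_fin_three, Matrix.submatrix_apply, Matrix.of_apply]
    have h1 : r 0 < r 1 := hr (by decide)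
    have h2 : s 0 < s 1 := hs (by decide)
    have h3 : r 1 < r 2 := hr (by decide)
    have h4 : s 1 < s 2 := hs (by decide)
    have := mul_nonneg (mul_nonneg hx hx) (mul_nonneg (habc _ _ _ h1 h3) (habc _ _ _ h2 h4))
    refine this.trans_eq ?_
    ring
  | k + 4, r, s, hr, hs =>
    apply le_of_eq
    symm
    by_contra hne
    have hu := (Matrix.isUnit_iff_isUnit_det _).2 (isUnit_iff_ne_zero.2 hne)
    have h1 := Matrix.rank_of_isUnit _ hu
    have h2 : (Matrix.of fun i j => a i * a j + x * (b i * b j + c i * c j)).submatrix r s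
      = (Matrix.of fun i => ![a (r i), x * b (r i), x * c (r i)]) *
        (Matrix.of fun (l : Fin 3) j => (![a (s j), b (s j), c (s j)] l)) := by
      ext i j
      simp [Matrix.mul_apply, Fin.sum_univ_three]
      ring
    rw [h2] at h1
    have h3 := Matrix.rank_mul_le_left (Matrix.of fun i => ![a (r i), x * b (r i), x * c (r i)])
        (Matrix.of fun (l : Fin 3) j => (![a (s j), b (s j), c (s j)] l))
    have h4 := Matrix.rank_le_width (Matrix.of fun i => ![a (r i), x * b (r i), x * c (r i)])
    simp at h1
    omega

lemma scale_tn {m n : ℕ} (A : Matrix (Fin m) (Fin n) ℝ) (c : ℝ) (hc : 0 ≤ c)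
    (hA : TotallyNonneg A) : TotallyNonneg (A.map fun x => c * x) := by
  intro k r s hr hs
  have : (A.map fun x => c * x).submatrix r s = c • A.submatrix r s := by
    ext; simp
  rw [this, Matrix.det_smul]
  exact mul_nonneg (by positivity) (hA k r s hr hs)

lemma entry_nonneg {m n : ℕ} {A : Matrix (Fin m) (Fin n) ℝ} (hA : TotallyNonneg A) (i j) :
    0 ≤ A i j := by
  have := hA 1 (fun _ => i) (fun _ => j) (Subsingleton.strictMono _) (Subsingleton.strictMono _)
  simpa using this

lemma const_tn {m n : ℕ} (c : ℝ) (hc : 0 ≤ c) :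
    TotallyNonneg (Matrix.of fun (_ : Fin m) (_ : Fin n) => c) := by
  intro k r s hr hs
  match k, r, s, hr, hs with
  | 0, r, s, hr, hs => simp
  | 1, r, s, hr, hs => simpa using hc
  | k + 2, r, s, hr, hs =>
    apply le_of_eq
    symm
    apply Matrix.det_zero_of_row_eq (i := 0) (j := 1) (by simp)
    ext; simp

def SymPres (f : ℝ → ℝ) : Prop := ∀ (n : ℕ) (A : Matrix (Fin n) (Fin n) ℝ), A.IsSymm →
  TotallyNonneg A → TotallyNonneg (A.map f)

lemma sym_gram {n : ℕ} (a b c : Fin n → ℝ) (x : ℝ) :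
    (Matrix.of fun i j => a i * a j + x * (b i * b j + c i * c j)).IsSymm := by
  ext i j; simp; ring

lemma pres_nonneg {F : ℝ → ℝ} (h : SymPres F) (x : ℝ) (hx : 0 ≤ x) : 0 ≤ F x := by
  have := entry_nonneg (h 1 (Matrix.of fun _ _ => x) (by ext; simp) (const_tn x hx)) 0 0
  simpa using this

lemma pres_le {F : ℝ → ℝ} (h : SymPres F) (p q r s : ℝ) (hp : 0 ≤ p) (hq : 0 ≤ q)
    (hr : 0 ≤ r) (hs : 0 ≤ s) : F (p * s) * F (q * r) ≤ F (p * r) * F (q * s) := by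
  have h1 := gram_tn (![p, q, r, s]) 0 0 0 le_rfl
    (by intro i; fin_cases i <;> simpa) (by simp) (by simp) (by simp) (by simp) (by simp) (by simp)
  have h2 := h 4 _ (sym_gram _ _ _ _) h1 2 ![0, 1] ![2, 3] (by decide) (by decide)
  rw [Matrix.det_fin_two] at h2
  simp at h2
  linarith

lemma pres_mul {F : ℝ → ℝ} (h : SymPres F) (x y : ℝ) (hx : 0 ≤ x) (hy : 0 ≤ y) :
    F (x * y) * F 1 = F x * F y := by
  have h1 := pres_le h x 1 y 1 hx (by simp) hy (by simp)
  have h2 := pres_le h x 1 1 y hx (by simp) (by simp) hy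
  simp at h1 h2
  linarith

lemma pres_super {f : ℝ → ℝ} (h : SymPres f) (h0 : f 0 = 0) (h1 : f 1 = 1)
    (hmul : ∀ x y, 0 ≤ x → 0 ≤ y → f (x * y) = f x * f y) (x y : ℝ) (hx : 0 ≤ x) (hy : 0 ≤ y) :
    f x + f y ≤ f (x + y) := by
  have h1' := gram_tn (![1, √x, 0]) (![0, √y, 1]) 0 1 (by simp)
    (by intro i; fin_cases i <;> simp) (by intro i; fin_cases i <;> simp) (by simp)
    (by intro i j hij; fin_cases i <;> fin_cases j <;> simp at hij ⊢) (by simp) (by simp) (by simp)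
  have h2 := h 3 _ (sym_gram _ _ _ _) h1' 3 id id strictMono_id strictMono_id
  have e1 := hmul (√x) (√x) (by simp) (by simp)
  have e2 := hmul (√y) (√y) (by simp) (by simp)
  rw [Real.mul_self_sqrt hx] at e1
  rw [Real.mul_self_sqrt hy] at e2
  simp [Matrix.det_fin_three, Real.mul_self_sqrt hx, Real.mul_self_sqrt hy, h0, h1] at h2
  linarith

lemma key_det {f : ℝ → ℝ} (h : SymPres f) (h1 : f 1 = 1) (x : ℝ) (hx : 0 ≤ x) :
    0 ≤ (!![f (1+x*2) - f (1+x*1), f (1+x*3) - f (1+x*1), f (1+x*4) - f (1+x*1);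
           f (1+x*5) - f (1+x*2), f (1+x*8) - f (1+x*2), f (1+x*12) - f (1+x*2);
           f (1+x*8) - f (1+x*3), f (1+x*13) - f (1+x*3), f (1+x*20) - f (1+x*3)]).det := by
  have h1' := gram_tn (fun _ => 1) (![0, 1, 2, 3, 4]) (![0, 0, 1, 2, 4]) x hx
    (by simp) (by intro i; fin_cases i <;> simp) (by intro i; fin_cases i <;> simp)
    (by intro i j hij; fin_cases i <;> fin_cases j <;> first | (norm_num; done) | (simp at hij; done))
    (by intro i j hij; fin_cases i <;> fin_cases j <;> first | (norm_num; done) | (simp at hij; done))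
    (by intro i j hij; fin_cases i <;> fin_cases j <;> first | (norm_num; done) | (simp at hij; done))
    (by intro i j k hij hjk; fin_cases i <;> fin_cases j <;> first | (simp at hij; done) | (fin_cases k <;> first | (norm_num; done) | (simp at hjk; done)))
  have h2 := h 5 _ (sym_gram _ _ _ _) h1' 4 Fin.castSucc Fin.succ Fin.strictMono_castSucc Fin.strictMono_succ
  refine h2.trans_eq ?_
  simp [Matrix.det_succ_row_zero, Fin.sum_univ_succ, Fin.succAbove, h1]
  norm_num
  ring

open Filter Topology in
lemma lim_one (p : ℝ) : Tendsto (fun y : ℝ => ((1 + y) ^ p - 1 - p * y) / y ^ 2) (𝓝[>] 0)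
    (𝓝 (p * (p - 1) / 2)) := by
  have hpos : ∀ᶠ y : ℝ in 𝓝[>] 0, 0 < y := eventually_mem_nhdsWithin
  have hd : ∀ (q y : ℝ), 0 ≤ y → HasDerivAt (fun y : ℝ => (1 + y) ^ q) (q * (1 + y) ^ (q - 1)) y := by
    intro q y hy
    have h1 : HasDerivAt (fun y : ℝ => 1 + y) 1 y := (hasDerivAt_id y).const_add 1
    have := h1.rpow_const (p := q) (Or.inl (by positivity))
    simpa using this
  apply HasDerivAt.lhopital_zero_nhdsGT (f' := fun y => p * (1 + y) ^ (p - 1) - p)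
    (g' := fun y => 2 * y)
  · filter_upwards [hpos] with y hy
    have := ((hd p y hy.le).sub_const 1).sub ((hasDerivAt_id y).const_mul p)
    rw [mul_one] at this
    exact this
  · filter_upwards with y
    simpa using hasDerivAt_pow 2 y
  · filter_upwards [hpos] with y hy
    positivity
  · have : ContinuousAt (fun y : ℝ => (1 + y) ^ p - 1 - p * y) 0 :=
      (((hd p 0 le_rfl).sub_const 1).sub ((hasDerivAt_id (0:ℝ)).const_mul p)).continuousAt
    have h2 := this.tendsto.mono_left (nhdsWithin_le_nhds (s := Set.Ioi 0))
    simpa using h2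
  · have : ContinuousAt (fun y : ℝ => y ^ 2) 0 := by fun_prop
    have h2 := this.tendsto.mono_left (nhdsWithin_le_nhds (s := Set.Ioi 0))
    simpa using h2
  · have h1 := (hd (p - 1) 0 le_rfl).tendsto_slope_zero_right
    have h2 := h1.const_mul (p / 2)
    refine (h2.congr' ?_).trans ?_
    · filter_upwards [hpos] with y hy
      simp
      field_simp
    · apply le_of_eq
      congr 1
      simp
      ring

open Filter Topology in
lemma lim_m (p : ℝ) (hp : 0 < p) (m : ℝ) (hm : 0 < m) :
    Tendsto (fun x : ℝ => ((1 + x * m) ^ p - 1 - p * (x * m)) / (p * x ^ 2)) (𝓝[>] 0)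
    (𝓝 ((p - 1) / 2 * m ^ 2)) := by
  have hpos : ∀ᶠ y : ℝ in 𝓝[>] 0, 0 < y := eventually_mem_nhdsWithin
  have h1 : Tendsto (fun x : ℝ => x * m) (𝓝[>] 0) (𝓝[>] 0) := by
    apply tendsto_nhdsWithin_of_tendsto_nhds_of_eventually_within
    · have : ContinuousAt (fun x : ℝ => x * m) 0 := by fun_prop
      have h2 := this.tendsto.mono_left (nhdsWithin_le_nhds (s := Set.Ioi 0))
      simpa using h2
    · filter_upwards [hpos] with y hy
      exact mul_pos hy hm
  have h2 := ((lim_one p).comp h1).const_mul (m ^ 2 / p)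
  refine (h2.congr' ?_).trans ?_
  · filter_upwards [hpos] with y hy
    simp
    field_simp
  · apply le_of_eq
    congr 1
    field_simp

def GG (x q1 q2 q3 q4 q5 q8 q12 q13 q20 : ℝ) : ℝ :=
    (
      -- first order
      (2 * (q2 - q1) - (q3 - q1)) + (-4 * (q5 - q2) + 2 * (q8 - q2))
        + (2 * (q8 - q3) - (q13 - q3)))
    + x * ((1 * ((q8 - q2) * (q20 - q3) - (q12 - q2) * (q13 - q3))
        - 2 * ((q5 - q2) * (q20 - q3) - (q12 - q2) * (q8 - q3))
        + 3 * ((q5 - q2) * (q13 - q3) - (q8 - q2) * (q8 - q3)))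
      - (3 * ((q3 - q1) * (q20 - q3) - (q4 - q1) * (q13 - q3))
        - 6 * ((q2 - q1) * (q20 - q3) - (q4 - q1) * (q8 - q3))
        + 10 * ((q2 - q1) * (q13 - q3) - (q3 - q1) * (q8 - q3)))
      + (5 * ((q3 - q1) * (q12 - q2) - (q4 - q1) * (q8 - q2))
        - 10 * ((q2 - q1) * (q12 - q2) - (q4 - q1) * (q5 - q2))
        + 17 * ((q2 - q1) * (q8 - q2) - (q3 - q1) * (q5 - q2))))
    + x ^ 2 * ((q2 - q1) * ((q8 - q2) * (q20 - q3) - (q12 - q2) * (q13 - q3))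
        - (q3 - q1) * ((q5 - q2) * (q20 - q3) - (q12 - q2) * (q8 - q3))
        + (q4 - q1) * ((q5 - q2) * (q13 - q3) - (q8 - q2) * (q8 - q3)))

open Filter Topology in
lemma GG_lim (l : Filter ℝ) (q : ℝ → ℝ → ℝ) (t : ℝ → ℝ) (hl : Tendsto (fun x => x) l (𝓝 0))
    (hq : ∀ m, 0 < m → Tendsto (q m) l (𝓝 (t m))) :
    Tendsto (fun x => GG x (q 1 x) (q 2 x) (q 3 x) (q 4 x) (q 5 x) (q 8 x) (q 12 x)
      (q 13 x) (q 20 x)) l (𝓝 (GG 0 (t 1) (t 2) (t 3) (t 4) (t 5) (t 8) (t 12) (t 13) (t 20))) := by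
  have l1 := hq 1 (by norm_num)
  have l2 := hq 2 (by norm_num)
  have l3 := hq 3 (by norm_num)
  have l4 := hq 4 (by norm_num)
  have l5 := hq 5 (by norm_num)
  have l8 := hq 8 (by norm_num)
  have l12 := hq 12 (by norm_num)
  have l13 := hq 13 (by norm_num)
  have l20 := hq 20 (by norm_num)
  have d1 := l2.sub l1
  have d2 := l3.sub l1
  have d3 := l4.sub l1
  have d4 := l5.sub l2
  have d5 := l8.sub l2
  have d6 := l12.sub l2
  have d7 := l8.sub l3
  have d8 := l13.sub l3
  have d9 := l20.sub l3
  unfold GG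
  have mn := fun {a b c d : ℝ → ℝ} {a' b' c' d' : ℝ} (ha : Tendsto a l (𝓝 a'))
    (hb : Tendsto b l (𝓝 b')) (hc : Tendsto c l (𝓝 c')) (hd : Tendsto d l (𝓝 d')) =>
    (ha.mul hb).sub (hc.mul hd)
  have m1 := mn d5 d9 d6 d8
  have m2 := mn d4 d9 d6 d7
  have m3 := mn d4 d8 d5 d7
  have A := (((m1.const_mul 1).sub (m2.const_mul 2)).add (m3.const_mul 3))
  have B := ((((mn d2 d9 d3 d8).const_mul 3).sub ((mn d1 d9 d3 d7).const_mul 6)).add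
    ((mn d1 d8 d2 d7).const_mul 10))
  have C := ((((mn d2 d6 d3 d5).const_mul 5).sub ((mn d1 d6 d3 d4).const_mul 10)).add
    ((mn d1 d5 d2 d4).const_mul 17))
  have D := ((d1.mul m1).sub (d2.mul m2)).add (d3.mul m3)
  have L := (((d1.const_mul 2).sub d2).add ((d4.const_mul (-4)).add (d5.const_mul 2))).add
    ((d7.const_mul 2).sub d8)
  exact (L.add (hl.mul ((A.sub B).add C))).add ((hl.pow 2).mul D)

open Filter Topology in
lemma no_big_power {f : ℝ → ℝ} (h : SymPres f) (p : ℝ) (hp : 1 < p)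
    (hf : ∀ x, 0 < x → f x = x ^ p) : False := by
  have hpos : ∀ᶠ y : ℝ in 𝓝[>] 0, 0 < y := eventually_mem_nhdsWithin
  have h1 : f 1 = 1 := by simp [hf]
  have hp0 : 0 < p := by linarith
  let q : ℝ → ℝ → ℝ := fun m x => ((1 + x * m) ^ p - 1 - p * (x * m)) / (p * x ^ 2)
  have hq : ∀ m x, 0 < m → 0 < x → f (1 + x * m) = 1 + p * x * (m + x * q m x) := by
    intro m x hm hx
    rw [hf _ (by positivity)]
    simp only [q]
    field_simp
    ring
  let c := (p - 1) / 2
  have hc : 0 < c := by simp only [c]; linarith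
  have hG : ∀ x, 0 < x → 0 ≤ GG x (q 1 x) (q 2 x) (q 3 x) (q 4 x) (q 5 x) (q 8 x) (q 12 x)
      (q 13 x) (q 20 x) := by
    intro x hx
    have hk := key_det h h1 x hx.le
    rw [hq 1 x (by norm_num) hx, hq 2 x (by norm_num) hx, hq 3 x (by norm_num) hx,
      hq 4 x (by norm_num) hx, hq 5 x (by norm_num) hx, hq 8 x (by norm_num) hx,
      hq 12 x (by norm_num) hx, hq 13 x (by norm_num) hx, hq 20 x (by norm_num) hx] at hk
    generalize q 1 x = q1 at *
    generalize q 2 x = q2 at *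
    generalize q 3 x = q3 at *
    generalize q 4 x = q4 at *
    generalize q 5 x = q5 at *
    generalize q 8 x = q8 at *
    generalize q 12 x = q12 at *
    generalize q 13 x = q13 at *
    generalize q 20 x = q20 at *
    have e : 0 ≤ (p ^ 3 * x ^ 4) * GG x q1 q2 q3 q4 q5 q8 q12 q13 q20 := by
      refine hk.trans_eq ?_
      simp only [Matrix.det_fin_three, GG]
      simp
      ring
    exact nonneg_of_mul_nonneg_right e (by positivity)
  have hl := GG_lim (𝓝[>] 0) q (fun m => c * m ^ 2) nhdsWithin_le_nhds (lim_m p hp0)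
  have hfin := ge_of_tendsto hl (by filter_upwards [hpos] with x hx using hG x hx)
  have : GG 0 (c * 1 ^ 2) (c * 2 ^ 2) (c * 3 ^ 2) (c * 4 ^ 2)
      (c * 5 ^ 2) (c * 8 ^ 2) (c * 12 ^ 2) (c * 13 ^ 2) (c * 20 ^ 2) = -16 * c := by
    unfold GG; ring
  simp only [this] at hfin
  linarith

lemma is_power {f : ℝ → ℝ} (hpos : ∀ x, 0 < x → 0 < f x)
    (hmono : ∀ x y, 0 < x → x ≤ y → f x ≤ f y)
    (hmul : ∀ x y, 0 ≤ x → 0 ≤ y → f (x * y) = f x * f y) :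
    ∃ p : ℝ, ∀ x, 0 < x → f x = x ^ p := by
  let φ : ℝ →+ ℝ := AddMonoidHom.mk' (fun t => Real.log (f (Real.exp t))) (by
    intro a b
    rw [Real.exp_add, hmul _ _ (Real.exp_pos _).le (Real.exp_pos _).le, Real.log_mul]
    · exact (hpos _ (Real.exp_pos _)).ne'
    · exact (hpos _ (Real.exp_pos _)).ne')
  have hm : Monotone φ := by
    intro a b hab
    exact Real.log_le_log (hpos _ (Real.exp_pos _))
      (hmono _ _ (Real.exp_pos _) (Real.exp_le_exp.2 hab))
  have hc : Continuous φ := MeasureTheory.Measure.AddMonoidHom.continuous_of_measurable φ hm.measurable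
  refine ⟨φ 1, fun x hx => ?_⟩
  have h1 := map_real_smul φ hc (Real.log x) 1
  have h2 : φ (Real.log x) = Real.log (f x) := by
    change Real.log (f (Real.exp (Real.log x))) = _
    rw [Real.exp_log hx]
  simp only [smul_eq_mul, mul_one] at h1
  rw [Real.rpow_def_of_pos hx, ← h1, h2, Real.exp_log (hpos x hx)]

lemma normalized {f : ℝ → ℝ} (h : SymPres f) (h1 : f 1 = 1) :
    (∀ x, 0 ≤ x → f x = 1) ∨ (∀ x, 0 ≤ x → f x = x) := by
  have hmul : ∀ x y, 0 ≤ x → 0 ≤ y → f (x * y) = f x * f y := by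
    intro x y hx hy
    have := pres_mul h x y hx hy
    rwa [h1, mul_one] at this
  by_cases h0 : f 0 = 0
  swap
  · left
    intro x hx
    have := hmul x 0 hx le_rfl
    rw [mul_zero] at this
    exact (mul_right_cancel₀ h0 (by rw [one_mul]; exact this)).symm
  right
  have hpos : ∀ x, 0 < x → 0 < f x := by
    intro x hx
    refine lt_of_le_of_ne (pres_nonneg h x hx.le) ?_
    intro he
    have := hmul x x⁻¹ hx.le (by positivity)
    rw [mul_inv_cancel₀ hx.ne', ← he, h1] at this
    simp at this
  have hsup := pres_super h h0 h1 hmul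
  have hmono : ∀ x y, 0 < x → x ≤ y → f x ≤ f y := by
    intro x y hx hxy
    have := hsup x (y - x) hx.le (by linarith)
    have h2 := pres_nonneg h (y - x) (by linarith)
    rw [add_sub_cancel] at this
    linarith
  obtain ⟨p, hp⟩ := is_power hpos hmono hmul
  have hp1 : 1 ≤ p := by
    have := hsup 1 1 (by simp) (by simp)
    rw [h1, hp _ (by norm_num)] at this
    by_contra hlt
    push Not at hlt
    have h3 := Real.rpow_lt_rpow_of_exponent_lt (x := 2) (by norm_num) hlt
    norm_num at this h3
    linarith
  rcases hp1.eq_or_lt with he | hlt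
  · intro x hx
    rcases hx.eq_or_lt with e | e
    · rw [← e, h0]
    · rw [hp x e, ← he, Real.rpow_one]
  · exact (no_big_power h p hlt hp).elim

theorem totally_nonneg_preserver_TFAE (F : ℝ → ℝ) :
    List.TFAE
      [∀ (m n : ℕ) (A : Matrix (Fin m) (Fin n) ℝ), TotallyNonneg A →
          TotallyNonneg (A.map F),
        ∀ (n : ℕ) (A : Matrix (Fin n) (Fin n) ℝ), A.IsSymm → TotallyNonneg A →
          TotallyNonneg (A.map F),
        ∃ c : ℝ, 0 ≤ c ∧
          ((∀ x ≥ (0 : ℝ), F x = c) ∨ (∀ x ≥ (0 : ℝ), F x = c * x))] := by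
  tfae_have 1 → 2 := fun h n A _ hA => h n n A hA
  tfae_have 2 → 3 := by
    intro h
    have hS : SymPres F := h
    have h1 := pres_nonneg hS 1 (by simp)
    refine ⟨F 1, h1, ?_⟩
    rcases h1.eq_or_lt with e | e
    · left
      intro x hx
      have := pres_mul hS x x hx hx
      rw [← e, mul_zero] at this
      rw [← e]
      exact mul_self_eq_zero.1 this.symm
    · have hn : SymPres (fun x => (F 1)⁻¹ * F x) := by
        intro n A hs hA
        have := scale_tn _ (F 1)⁻¹ (by positivity) (hS n A hs hA)
        rwa [Matrix.map_map] at this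
      rcases normalized hn (by field_simp) with h2 | h2
      · left
        intro x hx
        have := h2 x hx
        field_simp at this
        exact this
      · right
        intro x hx
        have := h2 x hx
        field_simp at this
        exact this
  tfae_have 3 → 1 := by
    rintro ⟨c, hc, h | h⟩ m n A hA
    · have : A.map F = Matrix.of fun _ _ => c := by
        ext i j
        simp [h _ (entry_nonneg hA i j)]
      rw [this]
      exact const_tn c hc
    · have : A.map F = A.map fun x => c * x := by
        ext i j
        simp [h _ (entry_nonneg hA i j)]
      rw [this]
      exact scale_tn A c hc hA
  tfae_finish
end

section
/- Let F(x) = ∑_{n=0}^∞ c_n x^n be given by a power series with real coefficients converging for every real x (an entire function with real coefficients). Applying F entrywise preserves total non-negativity for all 4×4 totally non-negative real matrices if and only if either F is the constant c₀ with c₀ ≥ 0, or F(x) = c₁x for all x ≥ 0 with c₁ ≥ 0. The same conclusion holds if F applied entrywise preserves total non-negativity for all symmetric 5×5 totally non-negative matrices. -/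
theorem aux_det_zero {k l : ℕ} (h : l < k) (P : Matrix (Fin k) (Fin l) ℝ)
    (Q : Matrix (Fin l) (Fin k) ℝ) : (P * Q).det = 0 := by
  by_contra hne
  have hu : IsUnit (P * Q) := (Matrix.isUnit_iff_isUnit_det _).2 (isUnit_iff_ne_zero.2 hne)
  have h1 := Matrix.rank_of_isUnit _ hu
  have h2 := Matrix.rank_mul_le_left P Q
  have h3 := P.rank_le_width
  simp at h1
  omega

theorem aux_tn_rank_one {N : ℕ} (w : Fin N → ℝ) (hw : ∀ i, 0 ≤ w i) :
    TotallyNonneg (Matrix.of fun i j => w i * w j) := by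
  intro k r c hr hc
  match k, r, c with
  | 0, r, c => simp
  | 1, r, c => simpa using mul_nonneg (hw _) (hw _)
  | k + 2, r, c =>
    have : (Matrix.of fun i j => w i * w j).submatrix r c
        = Matrix.vecMulVec (fun i => w (r i)) (fun j => w (c j)) := by
      ext i j; simp [Matrix.vecMulVec]
    rw [this, Matrix.det_vecMulVec]

theorem aux_tn_rank_three {N : ℕ} (u v : Fin N → ℝ) (x : ℝ) (hx : 0 ≤ x)
    (hu0 : ∀ i, 0 ≤ u i) (hv0 : ∀ i, 0 ≤ v i)
    (hu : ∀ i j, i < j → u i ≤ u j) (hv : ∀ i j, i < j → v i ≤ v j)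
    (huv : ∀ i j, i < j → u j * v i ≤ u i * v j)
    (h3 : ∀ i j k, i < j → j < k →
      0 ≤ (u j - u i) * (v k - v i) - (u k - u i) * (v j - v i)) :
    TotallyNonneg (Matrix.of fun i j => 1 + x * (u i * u j + v i * v j)) := by
  intro k r c hr hc
  match k, r, c, hr, hc with
  | 0, r, c, _, _ => simp
  | 1, r, c, _, _ =>
    have h1 := mul_nonneg (hu0 (r 0)) (hu0 (c 0))
    have h2 := mul_nonneg (hv0 (r 0)) (hv0 (c 0))
    simp
    positivity
  | 2, r, c, hr, hc =>
    have hr' : r 0 < r 1 := hr (by decide)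
    have hc' : c 0 < c 1 := hc (by decide)
    have e1 := mul_nonneg hx (mul_nonneg (sub_nonneg.2 (hu _ _ hr')) (sub_nonneg.2 (hu _ _ hc')))
    have e2 := mul_nonneg hx (mul_nonneg (sub_nonneg.2 (hv _ _ hr')) (sub_nonneg.2 (hv _ _ hc')))
    have e3 := mul_nonneg (mul_nonneg hx hx)
      (mul_nonneg (sub_nonneg.2 (huv _ _ hr')) (sub_nonneg.2 (huv _ _ hc')))
    rw [Matrix.det_fin_two]
    simp only [Matrix.submatrix_apply, Matrix.of_apply]
    linarith
  | 3, r, c, hr, hc =>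
    have e := mul_nonneg (mul_nonneg hx hx)
      (mul_nonneg (h3 _ _ _ (hr (show (0 : Fin 3) < 1 by decide)) (hr (show (1 : Fin 3) < 2 by decide)))
        (h3 _ _ _ (hc (show (0 : Fin 3) < 1 by decide)) (hc (show (1 : Fin 3) < 2 by decide))))
    rw [Matrix.det_fin_three]
    simp only [Matrix.submatrix_apply, Matrix.of_apply]
    linarith
  | k + 4, r, c, hr, hc =>
    have : (Matrix.of fun i j => 1 + x * (u i * u j + v i * v j)).submatrix r c
        = (Matrix.of fun (i : Fin (k + 4)) (l : Fin 3) => ![1, x * u (r i), x * v (r i)] l)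
          * (Matrix.of fun (l : Fin 3) (j : Fin (k + 4)) => ![1, u (c j), v (c j)] l) := by
      ext i j
      simp [Matrix.mul_apply, Fin.sum_univ_three]
      ring
    rw [this, aux_det_zero (by omega)]

/-- The symmetric test matrix. -/
noncomputable def auxT (x : ℝ) : Matrix (Fin 5) (Fin 5) ℝ :=
  Matrix.of fun i j => 1 + x * ((![0, 1, 2, 3, 4] : Fin 5 → ℝ) i * (![0, 1, 2, 3, 4] : Fin 5 → ℝ) j
    + (![0, 0, 0, 1, 2] : Fin 5 → ℝ) i * (![0, 0, 0, 1, 2] : Fin 5 → ℝ) j)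

theorem auxT_symm (x : ℝ) : (auxT x).IsSymm := by
  ext i j
  simp only [auxT, Matrix.transpose_apply, Matrix.of_apply]
  ring

theorem auxT_tn (x : ℝ) (hx : 0 ≤ x) : TotallyNonneg (auxT x) := by
  apply aux_tn_rank_three _ _ x hx
  · intro i; fin_cases i <;> norm_num
  · intro i; fin_cases i <;> norm_num
  · intro i j hij; fin_cases i <;> fin_cases j <;> first | (exfalso; revert hij; decide) | norm_num
  · intro i j hij; fin_cases i <;> fin_cases j <;> first | (exfalso; revert hij; decide) | norm_num
  · intro i j hij; fin_cases i <;> fin_cases j <;> first | (exfalso; revert hij; decide) | norm_num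
  · intro i j k hij hjk
    fin_cases i <;> fin_cases j <;> first | (exfalso; revert hij; decide) | skip
    all_goals fin_cases k <;> first | (exfalso; revert hjk; decide) | norm_num

/-- Divided power. -/
noncomputable def auxE (n : ℕ) (m x : ℝ) : ℝ := ∑ k ∈ Finset.range n, m * (1 + x * m) ^ k

theorem auxE_pow (n : ℕ) (m x : ℝ) : (1 + x * m) ^ n = 1 + x * auxE n m x := by
  have h := geom_sum_mul (1 + x * m) n
  rw [auxE, ← Finset.mul_sum]
  linear_combination -h

theorem auxE_zero (n : ℕ) (m : ℝ) : auxE n m 0 = n * m := by simp [auxE]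

theorem auxE_deriv (n : ℕ) (m : ℝ) :
    HasDerivAt (auxE n m) (m ^ 2 * ∑ k ∈ Finset.range n, (k : ℝ)) 0 := by
  have h : ∀ k ∈ Finset.range n,
      HasDerivAt (fun x : ℝ => m * (1 + x * m) ^ k) (m ^ 2 * (k : ℝ)) 0 := by
    intro k _
    have h1 : HasDerivAt (fun x : ℝ => 1 + x * m) m 0 := by
      simpa using ((hasDerivAt_id (0 : ℝ)).mul_const m).const_add 1
    have h2 := (h1.fun_pow k).const_mul m
    refine h2.congr_deriv ?_
    simp only [zero_mul, add_zero, one_pow]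
    ring
  have := HasDerivAt.fun_sum h
  rw [Finset.mul_sum]
  exact this

theorem aux_det (n : ℕ) (K x : ℝ) (M : Matrix (Fin 4) (Fin 4) ℝ)
    (hM : M = ((auxT x).submatrix Fin.castSucc Fin.succ).map (fun y => K * y ^ n)) :
    M.det = K ^ 4 * x ^ 3 *
     ((auxE n 2 x - auxE n 1 x) *
        ((auxE n 6 x - auxE n 2 x) * (auxE n 14 x - auxE n 3 x)
          - (auxE n 8 x - auxE n 2 x) * (auxE n 10 x - auxE n 3 x))
      - (auxE n 3 x - auxE n 1 x) *
        ((auxE n 4 x - auxE n 2 x) * (auxE n 14 x - auxE n 3 x)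
          - (auxE n 8 x - auxE n 2 x) * (auxE n 6 x - auxE n 3 x))
      + (auxE n 4 x - auxE n 1 x) *
        ((auxE n 4 x - auxE n 2 x) * (auxE n 10 x - auxE n 3 x)
          - (auxE n 6 x - auxE n 2 x) * (auxE n 6 x - auxE n 3 x))) := by
  have : M = Matrix.of ![![K, K, K, K],
      ![K * (1 + x * auxE n 1 x), K * (1 + x * auxE n 2 x), K * (1 + x * auxE n 3 x),
        K * (1 + x * auxE n 4 x)],
      ![K * (1 + x * auxE n 2 x), K * (1 + x * auxE n 4 x), K * (1 + x * auxE n 6 x),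
        K * (1 + x * auxE n 8 x)],
      ![K * (1 + x * auxE n 3 x), K * (1 + x * auxE n 6 x), K * (1 + x * auxE n 10 x),
        K * (1 + x * auxE n 14 x)]] := by
    have hE : ∀ m : ℝ, 1 + x * auxE n m x = (1 + x * m) ^ n := fun m => (auxE_pow n m x).symm
    rw [hM]
    simp only [hE]
    ext i j
    fin_cases i <;> fin_cases j <;> simp [auxT, Fin.castSucc, Fin.succ] <;> norm_num
  rw [this]
  simp [Matrix.det_succ_row_zero, Fin.sum_univ_succ, Fin.succAbove]
  ring

theorem aux_no_power (n : ℕ) (hn : 2 ≤ n) (K : ℝ) (hK : 0 < K)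
    (h : ∀ x : ℝ, 0 ≤ x →
      0 ≤ (((auxT x).submatrix Fin.castSucc Fin.succ).map (fun y => K * y ^ n)).det) : False := by
  set b : ℝ := ∑ k ∈ Finset.range n, (k : ℝ) with hb
  have hbpos : 0 < b := by
    have : (1 : ℝ) ≤ b := by
      have := Finset.single_le_sum (f := fun k : ℕ => (k : ℝ)) (s := Finset.range n)
        (fun i _ => Nat.cast_nonneg i) (Finset.mem_range.2 (show 1 < n by omega))
      simpa using this
    linarith
  have hnpos : (0 : ℝ) < n := by
    have : 0 < n := by omega
    exact_mod_cast this
  have D : ∀ m : ℝ, HasDerivAt (fun x => auxE n m x) (m ^ 2 * b) 0 := fun m => auxE_deriv n m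
  have S : ∀ m m' : ℝ, HasDerivAt (fun x => auxE n m x - auxE n m' x)
      (m ^ 2 * b - m' ^ 2 * b) 0 := fun m m' => (D m).fun_sub (D m')
  have hd := (((S 2 1).fun_mul (((S 6 2).fun_mul (S 14 3)).fun_sub ((S 8 2).fun_mul (S 10 3)))).fun_sub
    ((S 3 1).fun_mul (((S 4 2).fun_mul (S 14 3)).fun_sub ((S 8 2).fun_mul (S 6 3))))).fun_add
    ((S 4 1).fun_mul (((S 4 2).fun_mul (S 10 3)).fun_sub ((S 6 2).fun_mul (S 6 3))))
  simp only [auxE_zero] at hd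
  have hd' := hd.hasDerivWithinAt (s := Set.Ioi 0)
  rw [hasDerivWithinAt_iff_tendsto_slope' (by simp)] at hd'
  have hge := ge_of_tendsto (b := 0) hd' (by
    filter_upwards [self_mem_nhdsWithin] with x hx
    have hx : 0 < x := hx
    have h1 := h x hx.le
    rw [aux_det n K x _ rfl] at h1
    have h2 := nonneg_of_mul_nonneg_right h1 (by positivity)
    rw [slope_def_field]
    apply div_nonneg _ (by linarith)
    simp only [auxE_zero]
    linarith)
  have hp : 0 < (n : ℝ) ^ 2 * b := by positivity
  nlinarith

theorem aux_unique (d : ℕ → ℝ) (hd : ∀ x : ℝ, 0 < x → HasSum (fun n => d n * x ^ n) 0)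
    (f : ℝ → ℝ) (hf : ∀ x : ℝ, HasSum (fun n => d n * x ^ n) (f x)) : ∀ n, d n = 0 := by
  have hp : HasFPowerSeriesAt f (FormalMultilinearSeries.ofScalars ℝ d) 0 := by
    rw [hasFPowerSeriesAt_iff]
    refine Filter.Eventually.of_forall fun z => ?_
    simpa [FormalMultilinearSeries.coeff_ofScalars, mul_comm] using hf z
  by_contra hne
  push Not at hne
  obtain ⟨n, hn⟩ := hne
  have hp0 : FormalMultilinearSeries.ofScalars ℝ d ≠ 0 := by
    intro h0
    apply hn
    have := congrArg (fun p => FormalMultilinearSeries.coeff p n) h0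
    simp only [FormalMultilinearSeries.coeff_ofScalars] at this
    rw [this]
    rfl
  have h1 := hp.locally_ne_zero hp0
  have h2 : ∀ᶠ z in nhdsWithin (0 : ℝ) (Set.Ioi 0), f z ≠ 0 :=
    h1.filter_mono (nhdsWithin_mono _ (fun x hx => ne_of_gt hx))
  obtain ⟨z, hz, hz'⟩ := (h2.and self_mem_nhdsWithin).exists
  exact hz ((hf z).unique (hd z hz'))

theorem aux_core (c : ℕ → ℝ) (F : ℝ → ℝ)
    (hF : ∀ x : ℝ, HasSum (fun n => c n * x ^ n) (F x))
    (h1 : ∀ x : ℝ, 0 ≤ x → 0 ≤ F x)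
    (h2 : ∀ p q r s : ℝ, 0 ≤ p → 0 ≤ q → 0 ≤ r → 0 ≤ s →
      F (p * s) * F (q * r) ≤ F (p * r) * F (q * s))
    (h3 : ∀ x : ℝ, 0 ≤ x →
      0 ≤ (((auxT x).submatrix Fin.castSucc Fin.succ).map F).det) :
    (0 ≤ c 0 ∧ ∀ x : ℝ, F x = c 0) ∨ (0 ≤ c 1 ∧ ∀ x ≥ (0 : ℝ), F x = c 1 * x) := by
  have hmul : ∀ x y : ℝ, 0 ≤ x → 0 ≤ y → F x * F y = F 1 * F (x * y) := by
    intro x y hx hy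
    have a := h2 1 y 1 x zero_le_one hy zero_le_one hx
    have b := h2 1 y x 1 zero_le_one hy hx zero_le_one
    simp only [one_mul, mul_one] at a b
    rw [mul_comm y x] at a b
    linarith
  have hc : ∀ m, ∀ y : ℝ, 0 ≤ y → c m * F y = F 1 * (c m * y ^ m) := by
    intro m y hy
    have hs : ∀ x : ℝ, HasSum (fun n => (c n * F y - F 1 * (c n * y ^ n)) * x ^ n)
        (F x * F y - F 1 * F (x * y)) := by
      intro x
      have := ((hF x).mul_right (F y)).sub ((hF (x * y)).mul_left (F 1))
      have e : (fun n => (c n * F y - F 1 * (c n * y ^ n)) * x ^ n)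
          = fun b => c b * x ^ b * F y - F 1 * (c b * (x * y) ^ b) := by
        funext n
        rw [mul_pow]; ring
      rw [e]
      exact this
    have := aux_unique _ (fun x hx => by
      have := hs x
      rwa [hmul x y hx.le hy, sub_self] at this) _ hs m
    linarith
  by_cases hall : ∀ n, c n = 0
  · left
    refine ⟨(hall 0).ge, fun x => ?_⟩
    have := hF x
    simp only [hall, zero_mul] at this
    rw [hall 0]
    exact this.unique hasSum_zero
  push Not at hall
  obtain ⟨n, hn⟩ := hall
  have hFn : ∀ y : ℝ, 0 ≤ y → F y = F 1 * y ^ n := by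
    intro y hy
    have := hc n y hy
    apply mul_left_cancel₀ hn
    linarith
  have hF1 : F 1 ≠ 0 := by
    intro h0
    apply hn
    refine aux_unique c (fun x hx => ?_) F hF n
    have := hF x
    rwa [hFn x hx.le, h0, zero_mul] at this
  have hF1p : 0 < F 1 := lt_of_le_of_ne (h1 1 zero_le_one) hF1.symm
  have hother : ∀ m, m ≠ n → c m = 0 := by
    intro m hm
    have := hc m 2 (by norm_num)
    rw [hFn 2 (by norm_num)] at this
    have h4 : c m * ((2 : ℝ) ^ n - 2 ^ m) = 0 := by
      apply mul_left_cancel₀ hF1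
      linarith
    rcases mul_eq_zero.1 h4 with h | h
    · exact h
    · exfalso
      apply hm
      have h5 : (2 : ℕ) ^ n = 2 ^ m := by
        have : (2 : ℝ) ^ n = 2 ^ m := by linarith
        exact_mod_cast this
      exact (Nat.pow_right_injective le_rfl h5).symm
  have hval : ∀ x : ℝ, F x = c n * x ^ n := by
    intro x
    refine (hF x).unique (hasSum_single n fun m hm => ?_)
    rw [hother m hm, zero_mul]
  have hcn : F 1 = c n := by simpa using hval 1
  match n, hn, hFn, hval, hcn with
  | 0, _, _, hval, hcn => exact Or.inl ⟨hcn ▸ hF1p.le, fun x => by simpa using hval x⟩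
  | 1, _, _, hval, hcn => exact Or.inr ⟨hcn ▸ hF1p.le, fun x _ => by simpa using hval x⟩
  | n + 2, _, _, hval, hcn =>
    exfalso
    refine aux_no_power (n + 2) (by omega) (c (n + 2)) (hcn ▸ hF1p) ?_
    have : F = fun y => c (n + 2) * y ^ (n + 2) := funext hval
    rwa [this] at h3

theorem aux_tn_sub {m n m' n' : ℕ} {A : Matrix (Fin m) (Fin n) ℝ} (hA : TotallyNonneg A)
    (f : Fin m' → Fin m) (g : Fin n' → Fin n) (hf : StrictMono f) (hg : StrictMono g) :
    TotallyNonneg (A.submatrix f g) := by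
  intro k r c hr hc
  exact hA k (f ∘ r) (g ∘ c) (hf.comp hr) (hg.comp hc)

theorem aux_tn_entry {m n : ℕ} {A : Matrix (Fin m) (Fin n) ℝ} (hA : TotallyNonneg A)
    (i : Fin m) (j : Fin n) : 0 ≤ A i j := by
  have := hA 1 (fun _ => i) (fun _ => j) (Subsingleton.strictMono _) (Subsingleton.strictMono _)
  simpa using this

theorem aux_tn_two {m n : ℕ} {A : Matrix (Fin m) (Fin n) ℝ} (hA : TotallyNonneg A)
    (i j : Fin m) (k l : Fin n) (hij : i < j) (hkl : k < l) :
    A i l * A j k ≤ A i k * A j l := by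
  have := hA 2 ![i, j] ![k, l]
    (by intro a b hab; fin_cases a <;> fin_cases b <;> simp_all)
    (by intro a b hab; fin_cases a <;> fin_cases b <;> simp_all)
  rw [Matrix.det_fin_two] at this
  simp at this
  linarith

theorem aux_tn_det {n : ℕ} {A : Matrix (Fin n) (Fin n) ℝ} (hA : TotallyNonneg A) : 0 ≤ A.det := by
  simpa using hA n id id strictMono_id strictMono_id

/-- An entire function (with real coefficients) preserves total non-negativity entrywise
on `4 × 4` matrices iff it is a non-negative constant `c₀` or the linear map `c₁ x`
with `c₁ ≥ 0`; the same conclusion follows from preservation on symmetric `5 × 5`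
matrices. -/
theorem entire_totally_nonneg_preserver (c : ℕ → ℝ) (F : ℝ → ℝ)
    (hF : ∀ x : ℝ, HasSum (fun n => c n * x ^ n) (F x)) :
    ((∀ A : Matrix (Fin 4) (Fin 4) ℝ, TotallyNonneg A → TotallyNonneg (A.map F)) ↔
      ((0 ≤ c 0 ∧ ∀ x : ℝ, F x = c 0) ∨
        (0 ≤ c 1 ∧ ∀ x ≥ (0 : ℝ), F x = c 1 * x))) ∧
    ((∀ A : Matrix (Fin 5) (Fin 5) ℝ, A.IsSymm → TotallyNonneg A →
        TotallyNonneg (A.map F)) →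
      ((0 ≤ c 0 ∧ ∀ x : ℝ, F x = c 0) ∨
        (0 ≤ c 1 ∧ ∀ x ≥ (0 : ℝ), F x = c 1 * x))) := by
  refine ⟨⟨fun H => ?_, ?_⟩, fun H => ?_⟩
  · have R : ∀ p q r s : ℝ, 0 ≤ p → 0 ≤ q → 0 ≤ r → 0 ≤ s → TotallyNonneg
        ((Matrix.of fun i j : Fin 4 => ![p, q, r, s] i * ![p, q, r, s] j).map F) := by
      intro p q r s hp hq hr hs
      exact H _ (aux_tn_rank_one _ (by intro i; fin_cases i <;> simpa))
    refine aux_core c F hF (fun x hx => ?_) (fun p q r s hp hq hr hs => ?_) (fun x hx => ?_)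
    · simpa using aux_tn_entry (R 1 x 0 0 zero_le_one hx le_rfl le_rfl) 0 1
    · simpa using aux_tn_two (R p q r s hp hq hr hs) 0 1 2 3 (by decide) (by decide)
    · exact aux_tn_det (H _ (aux_tn_sub (auxT_tn x hx) _ _ (Fin.strictMono_castSucc)
        (Fin.strictMono_succ)))
  · rintro (⟨h0, hc⟩ | ⟨h1, hc⟩) A hA
    · have : A.map F = c 0 • (Matrix.of fun i j : Fin 4 => (1 : ℝ) * 1) := by
        ext i j; simp [hc]
      intro k r s hr hs
      rw [this, Matrix.submatrix_smul, Pi.smul_apply, Pi.smul_apply, Matrix.det_smul]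
      exact mul_nonneg (pow_nonneg h0 _)
        (aux_tn_rank_one (fun _ : Fin 4 => (1 : ℝ)) (fun _ => zero_le_one) k r s hr hs)
    · have : A.map F = c 1 • A := by
        ext i j; simp [hc _ (aux_tn_entry hA i j)]
      intro k r s hr hs
      rw [this, Matrix.submatrix_smul, Pi.smul_apply, Pi.smul_apply, Matrix.det_smul]
      exact mul_nonneg (pow_nonneg h1 _) (hA k r s hr hs)
  · have R : ∀ p q r s : ℝ, 0 ≤ p → 0 ≤ q → 0 ≤ r → 0 ≤ s → TotallyNonneg
        ((Matrix.of fun i j : Fin 5 => ![p, q, r, s, 0] i * ![p, q, r, s, 0] j).map F) := by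
      intro p q r s hp hq hr hs
      refine H _ ?_ (aux_tn_rank_one _ (by intro i; fin_cases i <;> simpa))
      ext i j
      simp only [Matrix.transpose_apply, Matrix.of_apply]
      ring
    refine aux_core c F hF (fun x hx => ?_) (fun p q r s hp hq hr hs => ?_) (fun x hx => ?_)
    · simpa using aux_tn_entry (R 1 x 0 0 zero_le_one hx le_rfl le_rfl) 0 1
    · simpa using aux_tn_two (R p q r s hp hq hr hs) 0 1 2 3 (by decide) (by decide)
    · exact aux_tn_det (aux_tn_sub (H _ (auxT_symm x) (auxT_tn x hx)) _ _
        (Fin.strictMono_castSucc) (Fin.strictMono_succ))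
end
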